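/- arXiv:2604.12462 — 2 statements merged into one kernel-verified Lean document; each statement's English description precedes it below -/
import Mathlib

section
/- For every pair of exponents 0 < p < q and every nonnegative measurable function f on ℝ^d that is integrable enough (e.g., f bounded, smooth, and bounded below by a positive constant), the functionals I_p defined with respect to the standard Gaussian measure γ_d by I_p(f) = (‖f‖_p^p − ‖f‖_1^p)/(p−1) for p ≠ 1 and I_1(f) = ∫ f log(f/‖f‖_1) dγ_d satisfy the Hölder-type inequality I_p(f) ≤ (Γ(1+1/q)/Γ(1+1/q−p/q)) · q^{p/q} · I_q(f)^{p/q}. -/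
/-!
The constant on the right is at least `1` (log-convexity of `Γ`), so it suffices that
`p ↦ I_p(f) ^ (1 / p)` is nondecreasing. Nothing about the Gaussian is used beyond its being a
probability measure.

By homogeneity let `∫ f = 1`. Then `I_p(f) = ∫ φ_p(f)`, where
`φ_p(t) = p ∫_1^t (t - s) s ^ (p - 2) ds`; the case `p = 1` needs no separate treatment in this form.
Exchanging integrals, `I_p(f) = ∫_0^∞ p s ^ (p - 1) h(s) ds` with `h(s) = E (1 - f / s)₊` for `s < 1`
and `h(s) = E (f / s - 1)₊` for `s > 1`, so `0 ≤ h ≤ 1`. The bathtub principle says that among such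
`h` with `I_q` fixed, `I_p` is largest for an indicator `1_{[0, R]}`, for which `I_p = R ^ p` and
`I_q = R ^ q`. Its dual form is the linear inequality
`I_p ≤ (1 - p / q) R ^ p + (p / q) R ^ (p - q) I_q` for every `R > 0`.
This linear inequality is what is proved here, and it comes from a bound, valid for each value `t` of
`f`, of `φ_p(t) - (p / q) R ^ (p - q) φ_q(t)` by an affine function of `t` (`bathtub_pointwise`).
Taking `R = I_q ^ (1 / q)` concludes.
-/

open MeasureTheory Real

noncomputable def gaussianMeasure (d : ℕ) : Measure (EuclideanSpace ℝ (Fin d)) :=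
  (volume : Measure (EuclideanSpace ℝ (Fin d))).withDensity
    (fun x => ENNReal.ofReal ((2 * π) ^ (-(d : ℝ) / 2) * Real.exp (-‖x‖ ^ 2 / 2)))

/-- The functional `I_p` with respect to the standard Gaussian measure. -/
noncomputable def Ifun (d : ℕ) (p : ℝ) (f : EuclideanSpace ℝ (Fin d) → ℝ) : ℝ :=
  if p = 1 then
    ∫ x, f x * Real.log (f x / ∫ y, f y ∂(gaussianMeasure d)) ∂(gaussianMeasure d)
  else
    ((∫ x, (f x) ^ p ∂(gaussianMeasure d)) - (∫ x, f x ∂(gaussianMeasure d)) ^ p) / (p - 1)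

/-! ### The functions `φ_p` -/

/-- `φ_p(t) = p ∫_1^t (t - s) s ^ (p - 2) ds`: the convex function with `φ_p(1) = φ_p'(1) = 0` and
`φ_p''(t) = p t ^ (p - 2)`, so that `I_p(f) = ∫ φ_p(f)` when `∫ f = 1`. -/
noncomputable def phi (p t : ℝ) : ℝ := p * ∫ s in (1 : ℝ)..t, (t - s) * s ^ (p - 2)

/-- The second derivative of `φ_p - (p / q) R ^ (p - q) φ_q`. It changes sign at `R`. -/
noncomputable def bathKernel (p q R s : ℝ) : ℝ := p * s ^ (p - 2) - p * R ^ (p - q) * s ^ (q - 2)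

/-- The primitive of `s ↦ s * bathKernel p q R s` that vanishes at `0`. -/
noncomputable def bathPrim (p q R s : ℝ) : ℝ := s ^ p - p / q * R ^ (p - q) * s ^ q

lemma uIcc_pos {a b s : ℝ} (ha : 0 < a) (hb : 0 < b) (hs : s ∈ Set.uIcc a b) : 0 < s :=
  lt_of_lt_of_le (lt_min ha hb) hs.1

lemma intervalIntegrable_mul_rpow {a b r : ℝ} (ha : 0 < a) (hb : 0 < b) {w : ℝ → ℝ}
    (hw : Continuous w) : IntervalIntegrable (fun s => w s * s ^ r) volume a b := by
  apply ContinuousOn.intervalIntegrable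
  intro s hs
  have := uIcc_pos ha hb hs
  exact (hw.continuousAt.mul (continuousAt_id.rpow_const (Or.inl this.ne'))).continuousWithinAt

lemma intervalIntegrable_mul_bathKernel {a b p q R : ℝ} (ha : 0 < a) (hb : 0 < b) {w : ℝ → ℝ}
    (hw : Continuous w) :
    IntervalIntegrable (fun s => w s * bathKernel p q R s) volume a b := by
  have h := ((intervalIntegrable_mul_rpow (r := p - 2) ha hb hw).const_mul p).sub
    ((intervalIntegrable_mul_rpow (r := q - 2) ha hb hw).const_mul (p * R ^ (p - q)))
  refine h.congr ?_
  intro s _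
  simp only [bathKernel]
  ring

lemma sub_mul_rpow_eq {p t s : ℝ} (hs : 0 < s) :
    (t - s) * s ^ (p - 2) = t * s ^ (p - 2) - s ^ (p - 1) := by
  have : s ^ (p - 1) = s ^ (p - 2) * s := by
    rw [← rpow_add_one hs.ne']; ring_nf
  rw [this]; ring

lemma phi_split {p t : ℝ} (hp : 0 < p) (ht : 0 < t) :
    phi p t = p * (t * ∫ s in (1 : ℝ)..t, s ^ (p - 2)) - (t ^ p - 1) := by
  have h0 : (0 : ℝ) ∉ Set.uIcc 1 t := fun h => (uIcc_pos one_pos ht h).ne' rfl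
  have h1 : ∫ s in (1 : ℝ)..t, (t - s) * s ^ (p - 2)
      = ∫ s in (1 : ℝ)..t, (t * s ^ (p - 2) - s ^ (p - 1)) :=
    intervalIntegral.integral_congr fun s hs => sub_mul_rpow_eq (uIcc_pos one_pos ht hs)
  have hi1 := intervalIntegrable_mul_rpow (r := p - 2) one_pos ht (continuous_const (y := t))
  have hi2 : IntervalIntegrable (fun s : ℝ => s ^ (p - 1)) volume 1 t :=
    intervalIntegral.intervalIntegrable_rpow (Or.inr h0)
  rw [phi, h1, intervalIntegral.integral_sub hi1 hi2, intervalIntegral.integral_const_mul,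
    integral_rpow (r := p - 1) (Or.inl (by linarith))]
  simp only [sub_add_cancel, one_rpow]
  field_simp

lemma phi_eq_of_ne_one {p t : ℝ} (hp : 0 < p) (hp1 : p ≠ 1) (ht : 0 < t) :
    phi p t = (t ^ p - 1) / (p - 1) - p / (p - 1) * (t - 1) := by
  have h0 : (0 : ℝ) ∉ Set.uIcc 1 t := fun h => (uIcc_pos one_pos ht h).ne' rfl
  have h1 : p - 1 ≠ 0 := sub_ne_zero.2 hp1
  rw [phi_split hp ht, integral_rpow (Or.inr ⟨fun h => h1 (by linarith), h0⟩)]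
  have e : p - 2 + 1 = p - 1 := by ring
  have : t ^ p = t ^ (p - 1) * t := by
    rw [← rpow_add_one ht.ne']; ring_nf
  rw [e, one_rpow, this]
  field_simp
  ring

lemma phi_one_eq {t : ℝ} (ht : 0 < t) : phi 1 t = t * log t - (t - 1) := by
  rw [phi_split one_pos ht]
  have h1 : ∫ s in (1 : ℝ)..t, s ^ ((1 : ℝ) - 2) = ∫ s in (1 : ℝ)..t, s⁻¹ :=
    intervalIntegral.integral_congr fun s _ => by
      rw [← rpow_neg_one]; norm_num
  rw [h1, integral_inv_of_pos one_pos ht]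
  simp

lemma phi_nonneg {p t : ℝ} (hp : 0 < p) (ht : 0 < t) : 0 ≤ phi p t := by
  refine mul_nonneg hp.le ?_
  rcases le_total 1 t with h | h
  · refine intervalIntegral.integral_nonneg h fun s hs => ?_
    exact mul_nonneg (by linarith [hs.2]) (rpow_nonneg (by linarith [hs.1]) _)
  · rw [intervalIntegral.integral_symm, ← intervalIntegral.integral_neg]
    refine intervalIntegral.integral_nonneg h fun s hs => ?_
    rw [← neg_mul]
    exact mul_nonneg (by linarith [hs.1]) (rpow_nonneg (by linarith [hs.1]) _)

/-! ### The pointwise bathtub inequality -/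

lemma phi_sub_phi {p q R t : ℝ} (hq : 0 < q) (ht : 0 < t) :
    phi p t - p / q * R ^ (p - q) * phi q t
      = ∫ s in (1 : ℝ)..t, (t - s) * bathKernel p q R s := by
  have hw : Continuous fun s : ℝ => t - s := by fun_prop
  have hi1 := (intervalIntegrable_mul_rpow (r := p - 2) one_pos ht hw).const_mul p
  have hi2 := (intervalIntegrable_mul_rpow (r := q - 2) one_pos ht hw).const_mul
    (p * R ^ (p - q))
  have h : ∫ s in (1 : ℝ)..t, (t - s) * bathKernel p q R s
      = ∫ s in (1 : ℝ)..t, (p * ((t - s) * s ^ (p - 2))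
          - p * R ^ (p - q) * ((t - s) * s ^ (q - 2))) :=
    intervalIntegral.integral_congr fun s _ => by simp only [bathKernel]; ring
  rw [h, intervalIntegral.integral_sub hi1 hi2, intervalIntegral.integral_const_mul,
    intervalIntegral.integral_const_mul, phi, phi]
  field_simp

lemma bathKernel_eq {p q R s : ℝ} (hR : 0 < R) (hs : 0 < s) :
    bathKernel p q R s = p * s ^ (p - 2) * R ^ (p - q) * (R ^ (q - p) - s ^ (q - p)) := by
  have h1 : R ^ (p - q) * R ^ (q - p) = 1 := by
    rw [← rpow_add hR]; simp
  have h2 : s ^ (q - 2) = s ^ (p - 2) * s ^ (q - p) := by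
    rw [← rpow_add hs]; ring_nf
  rw [bathKernel, h2]
  linear_combination (-(p * s ^ (p - 2))) * h1

lemma bathKernel_nonneg {p q R s : ℝ} (hp : 0 < p) (hpq : p < q) (hs : 0 < s) (hsR : s ≤ R) :
    0 ≤ bathKernel p q R s := by
  have hR : 0 < R := hs.trans_le hsR
  rw [bathKernel_eq hR hs]
  have := rpow_le_rpow hs.le hsR (sub_nonneg.2 hpq.le)
  exact mul_nonneg (by positivity) (by linarith)

lemma bathKernel_nonpos {p q R s : ℝ} (hp : 0 < p) (hpq : p < q) (hR : 0 < R) (hsR : R ≤ s) :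
    bathKernel p q R s ≤ 0 := by
  have hs : 0 < s := hR.trans_le hsR
  rw [bathKernel_eq hR hs]
  have := rpow_le_rpow hR.le hsR (sub_nonneg.2 hpq.le)
  exact mul_nonpos_of_nonneg_of_nonpos (by positivity) (by linarith)

lemma integral_id_mul_bathKernel {p q R a b : ℝ} (hp : 0 < p) (hq : 0 < q)
    (ha : 0 < a) (hb : 0 < b) :
    ∫ s in a..b, s * bathKernel p q R s = bathPrim p q R b - bathPrim p q R a := by
  refine intervalIntegral.integral_eq_sub_of_hasDerivAt (fun s hs => ?_)
    (intervalIntegrable_mul_bathKernel ha hb continuous_id)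
  have hs0 := uIcc_pos ha hb hs
  have h := (hasDerivAt_rpow_const (p := p) (Or.inl hs0.ne')).sub
    ((hasDerivAt_rpow_const (p := q) (Or.inl hs0.ne')).const_mul (p / q * R ^ (p - q)))
  refine h.congr_deriv ?_
  have e1 : s ^ (p - 1) = s ^ (p - 2) * s := by rw [← rpow_add_one hs0.ne']; ring_nf
  have e2 : s ^ (q - 1) = s ^ (q - 2) * s := by rw [← rpow_add_one hs0.ne']; ring_nf
  rw [e1, e2, bathKernel]
  field_simp

lemma bathPrim_self {p q R : ℝ} (hR : 0 < R) :
    bathPrim p q R R = (1 - p / q) * R ^ p := by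
  have : R ^ (p - q) * R ^ q = R ^ p := by rw [← rpow_add hR]; ring_nf
  rw [bathPrim, mul_assoc, this]; ring

lemma bathPrim_nonneg {p q R s : ℝ} (hp : 0 < p) (hpq : p < q) (hs : 0 < s) (hsR : s ≤ R) :
    0 ≤ bathPrim p q R s := by
  have hR : 0 < R := hs.trans_le hsR
  have hq : 0 < q := hp.trans hpq
  have h1 : s ^ q = s ^ p * s ^ (q - p) := by rw [← rpow_add hs]; ring_nf
  have h2 : R ^ (p - q) * s ^ (q - p) ≤ 1 := by
    calc R ^ (p - q) * s ^ (q - p) ≤ R ^ (p - q) * R ^ (q - p) := by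
          gcongr
      _ = 1 := by rw [← rpow_add hR]; simp
  have h3 : p / q * (R ^ (p - q) * s ^ (q - p)) ≤ 1 :=
    mul_le_one₀ ((div_le_one hq).2 hpq.le) (by positivity) h2
  have h4 : bathPrim p q R s = s ^ p * (1 - p / q * (R ^ (p - q) * s ^ (q - p))) := by
    rw [bathPrim, h1]; ring
  rw [h4]
  exact mul_nonneg (by positivity) (by linarith)

lemma integral_mul_bathKernel_nonpos {p q R a b : ℝ} (hp : 0 < p) (hpq : p < q) (hR : 0 < R)
    (ha : R ≤ a) (hab : a ≤ b) {w : ℝ → ℝ} (hw : ∀ s ∈ Set.Icc a b, 0 ≤ w s) :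
    ∫ s in a..b, w s * bathKernel p q R s ≤ 0 := by
  rw [← neg_nonneg, ← intervalIntegral.integral_neg]
  refine intervalIntegral.integral_nonneg hab fun s hs => ?_
  rw [neg_nonneg]
  exact mul_nonpos_of_nonneg_of_nonpos (hw s hs) (bathKernel_nonpos hp hpq hR (ha.trans hs.1))

/-- The bound `(s - t)₊ ≤ s` (that is, `(1 - t / s)₊ ≤ 1`), integrated over `s ≤ ρ ≤ R`. -/
lemma integral_sub_mul_bathKernel_le {p q R t ρ : ℝ} (hp : 0 < p) (hpq : p < q) (ht : 0 < t)
    (htρ : t ≤ ρ) (hρR : ρ ≤ R) :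
    ∫ s in t..ρ, (s - t) * bathKernel p q R s ≤ bathPrim p q R ρ := by
  have hρ : 0 < ρ := ht.trans_le htρ
  have h : ∫ s in t..ρ, (s - t) * bathKernel p q R s ≤ ∫ s in t..ρ, s * bathKernel p q R s := by
    refine intervalIntegral.integral_mono_on htρ
      (intervalIntegrable_mul_bathKernel ht hρ (by fun_prop))
      (intervalIntegrable_mul_bathKernel ht hρ continuous_id) fun s hs => ?_
    exact mul_le_mul_of_nonneg_right (by linarith)
      (bathKernel_nonneg hp hpq (ht.trans_le hs.1) (hs.2.trans hρR))
  rw [integral_id_mul_bathKernel hp (hp.trans hpq) ht hρ] at h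
  linarith [bathPrim_nonneg hp hpq ht (htρ.trans hρR)]

/-- The bound `(t - s)₊ ≤ t`, integrated over `1 ≤ s ≤ ρ ≤ R`. -/
lemma integral_sub_mul_bathKernel_le' {p q R t ρ : ℝ} (hp : 0 < p) (hpq : p < q) (hρ : 1 ≤ ρ)
    (hρR : ρ ≤ R) :
    ∫ s in (1 : ℝ)..ρ, (t - s) * bathKernel p q R s
      ≤ t * ∫ s in (1 : ℝ)..ρ, 1 * bathKernel p q R s := by
  have hρ0 : 0 < ρ := one_pos.trans_le hρ
  rw [← intervalIntegral.integral_const_mul]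
  refine intervalIntegral.integral_mono_on hρ
    (intervalIntegrable_mul_bathKernel one_pos hρ0 (by fun_prop))
    ((intervalIntegrable_mul_bathKernel one_pos hρ0 continuous_const).const_mul t) fun s hs => ?_
  rw [one_mul]
  exact mul_le_mul_of_nonneg_right (by linarith [hs.1])
    (bathKernel_nonneg hp hpq (by linarith [hs.1]) (hs.2.trans hρR))

/-- Pointwise bathtub inequality: an affine majorant of `φ_p - (p / q) R ^ (p - q) φ_q` on `(0, ∞)`
whose value at `1` is at most `(1 - p / q) R ^ p`. -/
lemma bathtub_pointwise {p q R : ℝ} (hp : 0 < p) (hpq : p < q) (hR : 0 < R) :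
    ∃ A B : ℝ, A + B ≤ (1 - p / q) * R ^ p ∧
      ∀ t, 0 < t → phi p t - p / q * R ^ (p - q) * phi q t ≤ A + B * t := by
  have hq : 0 < q := hp.trans hpq
  have hswap : ∀ t : ℝ, ∫ s in (1 : ℝ)..t, (t - s) * bathKernel p q R s
      = ∫ s in t..(1 : ℝ), (s - t) * bathKernel p q R s := fun t => by
    rw [intervalIntegral.integral_symm, ← intervalIntegral.integral_neg]
    congr 1; ext s; ring
  -- For `R ≤ 1` only values `s ≤ R` lie under the indicator, and a constant majorant is enough.
  -- For `R > 1` the slope `B` accounts for `s ∈ [1, R]`.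
  rcases le_or_gt R 1 with hR1 | hR1
  · refine ⟨bathPrim p q R R, 0, by rw [bathPrim_self hR, add_zero], fun t ht => ?_⟩
    rw [phi_sub_phi hq ht, zero_mul, add_zero]
    have hH := bathPrim_nonneg hp hpq hR le_rfl
    rcases le_total 1 t with h1 | h1
    · exact (integral_mul_bathKernel_nonpos hp hpq hR hR1 h1
        fun s hs => by linarith [hs.2]).trans hH
    rw [hswap]
    rcases le_total R t with h2 | h2
    · exact (integral_mul_bathKernel_nonpos hp hpq hR h2 h1
        fun s hs => by linarith [hs.1]).trans hH
    · have hw : Continuous fun s : ℝ => s - t := by fun_prop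
      rw [← intervalIntegral.integral_add_adjacent_intervals
        (intervalIntegrable_mul_bathKernel ht hR hw)
        (intervalIntegrable_mul_bathKernel hR one_pos hw)]
      have e1 := integral_sub_mul_bathKernel_le hp hpq ht h2 le_rfl
      have e2 := integral_mul_bathKernel_nonpos (w := fun s => s - t) hp hpq hR le_rfl hR1
        fun s hs => by linarith [hs.1]
      linarith
  · have hB : ∀ a b : ℝ, 1 ≤ a → a ≤ b → b ≤ R →
        0 ≤ ∫ s in a..b, 1 * bathKernel p q R s := fun a b ha hab hbR =>
      intervalIntegral.integral_nonneg hab fun s hs => by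
        rw [one_mul]
        exact bathKernel_nonneg hp hpq (by linarith [hs.1]) (hs.2.trans hbR)
    have hH := bathPrim_nonneg hp hpq one_pos hR1.le
    refine ⟨bathPrim p q R 1, ∫ s in (1 : ℝ)..R, 1 * bathKernel p q R s, ?_, fun t ht => ?_⟩
    · have e : ∫ s in (1 : ℝ)..R, 1 * bathKernel p q R s
          ≤ ∫ s in (1 : ℝ)..R, s * bathKernel p q R s := by
        refine intervalIntegral.integral_mono_on hR1.le
          (intervalIntegrable_mul_bathKernel one_pos hR continuous_const)
          (intervalIntegrable_mul_bathKernel one_pos hR continuous_id) fun s hs => ?_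
        exact mul_le_mul_of_nonneg_right hs.1
          (bathKernel_nonneg hp hpq (by linarith [hs.1]) hs.2)
      rw [integral_id_mul_bathKernel hp hq one_pos hR, bathPrim_self hR] at e
      linarith
    · rw [phi_sub_phi hq ht]
      have hB0 := hB 1 R le_rfl hR1.le le_rfl
      rcases le_total t 1 with h1 | h1
      · rw [hswap]
        have := integral_sub_mul_bathKernel_le hp hpq ht h1 hR1.le
        linarith [mul_nonneg hB0 ht.le]
      rcases le_total t R with h2 | h2
      · have e1 := integral_sub_mul_bathKernel_le' (t := t) hp hpq h1 h2
        have e2 := mul_nonneg ht.le (hB t R h1 h2 le_rfl)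
        rw [← intervalIntegral.integral_add_adjacent_intervals
          (intervalIntegrable_mul_bathKernel one_pos ht continuous_const)
          (intervalIntegrable_mul_bathKernel ht hR continuous_const)]
        linarith
      · have e1 := integral_sub_mul_bathKernel_le' (t := t) hp hpq hR1.le le_rfl
        have e2 := integral_mul_bathKernel_nonpos (w := fun s => t - s) hp hpq hR le_rfl h2
          fun s hs => by linarith [hs.2]
        have hw : Continuous fun s : ℝ => t - s := by fun_prop
        rw [← intervalIntegral.integral_add_adjacent_intervals
          (intervalIntegrable_mul_bathKernel one_pos hR hw)
          (intervalIntegrable_mul_bathKernel hR ht hw)]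
        linarith

/-! ### Functions of mean one on a probability space -/

section Probability

variable {Ω : Type*} [MeasurableSpace Ω] {μ : Measure Ω}

lemma integrable_comp_of_bounded [IsFiniteMeasure μ] {u : Ω → ℝ} (hu : Measurable u) {a b : ℝ}
    (hua : ∀ x, a ≤ u x) (hub : ∀ x, u x ≤ b) {F : ℝ → ℝ} (hF : Measurable F)
    (hFc : ContinuousOn F (Set.Icc a b)) : Integrable (fun x => F (u x)) μ := by
  obtain ⟨C, hC⟩ := isCompact_Icc.exists_bound_of_continuousOn hFc
  exact Integrable.of_bound (hF.comp hu).aestronglyMeasurable C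
    (Filter.Eventually.of_forall fun x => hC _ ⟨hua x, hub x⟩)

lemma integrable_rpow_of_bounded [IsFiniteMeasure μ] {u : Ω → ℝ} (hu : Measurable u) {a b : ℝ}
    (ha : 0 < a) (hua : ∀ x, a ≤ u x) (hub : ∀ x, u x ≤ b) (p : ℝ) :
    Integrable (fun x => u x ^ p) μ :=
  integrable_comp_of_bounded hu hua hub (F := fun t => t ^ p) (by fun_prop)
    fun t ht => (continuousAt_id.rpow_const
      (Or.inl (ha.trans_le ht.1).ne')).continuousWithinAt

lemma integrable_mul_log_of_bounded [IsFiniteMeasure μ] {u : Ω → ℝ} (hu : Measurable u) {a b : ℝ}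
    (hua : ∀ x, a ≤ u x) (hub : ∀ x, u x ≤ b) :
    Integrable (fun x => u x * log (u x)) μ :=
  integrable_comp_of_bounded hu hua hub (F := fun t => t * log t) (by fun_prop)
    Real.continuous_mul_log.continuousOn

/-- For a function of mean `1`, integrating `φ_p` gives `I_p`. -/
lemma integral_phi [IsProbabilityMeasure μ] {u : Ω → ℝ} (hu : Measurable u) {a b : ℝ}
    (ha : 0 < a) (hua : ∀ x, a ≤ u x) (hub : ∀ x, u x ≤ b) (hmean : ∫ x, u x ∂μ = 1)
    {p : ℝ} (hp : 0 < p) :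
    Integrable (fun x => phi p (u x)) μ ∧
      ∫ x, phi p (u x) ∂μ =
        if p = 1 then ∫ x, u x * log (u x) ∂μ else (∫ x, u x ^ p ∂μ - 1) / (p - 1) := by
  have hu0 : ∀ x, 0 < u x := fun x => ha.trans_le (hua x)
  have hint : Integrable u μ :=
    integrable_comp_of_bounded hu hua hub (F := fun t => t) measurable_id continuousOn_id
  have hi1 : Integrable (fun x => u x - 1) μ := hint.sub (integrable_const 1)
  have hz : ∫ x, (u x - 1) ∂μ = 0 := by
    rw [integral_sub hint (integrable_const 1), hmean]; simp
  split_ifs with h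
  · subst h
    have e : (fun x => phi 1 (u x)) = fun x => u x * log (u x) - (u x - 1) :=
      funext fun x => phi_one_eq (hu0 x)
    have hl := integrable_mul_log_of_bounded (μ := μ) hu hua hub
    rw [e]
    exact ⟨hl.sub hi1, by rw [integral_sub hl hi1, hz, sub_zero]⟩
  · have e : (fun x => phi p (u x))
        = fun x => (u x ^ p - 1) / (p - 1) - p / (p - 1) * (u x - 1) :=
      funext fun x => phi_eq_of_ne_one hp h (hu0 x)
    have hr := integrable_rpow_of_bounded (μ := μ) hu ha hua hub p
    have hr1 : Integrable (fun x => (u x ^ p - 1) / (p - 1)) μ :=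
      (hr.sub (integrable_const 1)).div_const _
    have hi2 := hi1.const_mul (p / (p - 1))
    rw [e]
    refine ⟨hr1.sub hi2, ?_⟩
    rw [integral_sub hr1 hi2, integral_const_mul, hz, integral_div,
      integral_sub hr (integrable_const 1)]
    simp

/-- Monotonicity of `p ↦ I_p ^ (1 / p)` for functions of mean `1`. -/
lemma integral_phi_le [IsProbabilityMeasure μ] {u : Ω → ℝ} (hu : Measurable u) {a b : ℝ}
    (ha : 0 < a) (hua : ∀ x, a ≤ u x) (hub : ∀ x, u x ≤ b) (hmean : ∫ x, u x ∂μ = 1)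
    {p q : ℝ} (hp : 0 < p) (hpq : p < q) :
    ∫ x, phi p (u x) ∂μ ≤ (∫ x, phi q (u x) ∂μ) ^ (p / q) := by
  have hq : 0 < q := hp.trans hpq
  have hu0 : ∀ x, 0 < u x := fun x => ha.trans_le (hua x)
  have hint : Integrable u μ :=
    integrable_comp_of_bounded hu hua hub (F := fun t => t) measurable_id continuousOn_id
  have hip := (integral_phi hu ha hua hub hmean hp).1
  have hiq := (integral_phi hu ha hua hub hmean hq).1
  have key : ∀ R : ℝ, 0 < R → ∫ x, phi p (u x) ∂μ
      ≤ (1 - p / q) * R ^ p + p / q * R ^ (p - q) * ∫ x, phi q (u x) ∂μ := by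
    intro R hR
    obtain ⟨A, B, hAB, h⟩ := bathtub_pointwise hp hpq hR
    have hm : ∫ x, (phi p (u x) - p / q * R ^ (p - q) * phi q (u x)) ∂μ
        ≤ ∫ x, (A + B * u x) ∂μ :=
      integral_mono (hip.sub (hiq.const_mul _)) ((integrable_const A).add (hint.const_mul B))
        fun x => h _ (hu0 x)
    rw [integral_sub hip (hiq.const_mul _), integral_const_mul,
      integral_add (integrable_const A) (hint.const_mul B), integral_const_mul, hmean] at hm
    simp at hm
    linarith
  have hQ : 0 ≤ ∫ x, phi q (u x) ∂μ := integral_nonneg fun x => phi_nonneg hq (hu0 x)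
  -- `R = Q ^ (1 / q)` is only admissible when `Q > 0`; when `Q = 0`, let `R → 0`.
  rcases hQ.eq_or_lt with h0 | hQ
  · rw [← h0, zero_rpow (div_pos hp hq).ne']
    have hlim : Filter.Tendsto (fun R : ℝ => (1 - p / q) * R ^ p)
        (nhdsWithin 0 (Set.Ioi 0)) (nhds 0) := by
      have hc : ContinuousAt (fun R : ℝ => (1 - p / q) * R ^ p) 0 :=
        continuousAt_const.mul (continuousAt_id.rpow_const (Or.inr hp.le))
      have := hc.tendsto
      simp only [zero_rpow hp.ne', mul_zero] at this
      exact this.mono_left nhdsWithin_le_nhds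
    refine ge_of_tendsto hlim ?_
    filter_upwards [self_mem_nhdsWithin] with R hR
    have := key R hR
    rw [← h0] at this
    linarith
  · set Q := ∫ x, phi q (u x) ∂μ
    have h := key (Q ^ (1 / q)) (rpow_pos_of_pos hQ _)
    rw [← rpow_mul hQ.le, ← rpow_mul hQ.le] at h
    have e : Q ^ (1 / q * (p - q)) * Q = Q ^ (p / q) := by
      rw [← rpow_add_one hQ.ne']; congr 1; field_simp; ring
    have e2 : 1 / q * p = p / q := by ring
    rw [e2, mul_assoc, e] at h
    linarith

end Probability

/-! ### The Gamma constant and the Gaussian measure -/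

/-- With `a = 1 / q` and `s = p / q`, log-convexity of `Γ` on `[a, a + 1]` gives
`Γ(1 + a - s) ≤ Γ(1 + a) ^ (1 - s) Γ(a) ^ s = Γ(1 + a) a ^ (-s)`. -/
lemma one_le_gamma_const {p q : ℝ} (hp : 0 < p) (hpq : p < q) :
    1 ≤ Real.Gamma (1 + 1 / q) / Real.Gamma (1 + 1 / q - p / q) * q ^ (p / q) := by
  have hq : 0 < q := hp.trans hpq
  have ha : 0 < 1 / q := by positivity
  have hs : 0 < p / q := div_pos hp hq
  have hs1 : p / q < 1 := (div_lt_one hq).2 hpq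
  have h := Real.Gamma_mul_add_mul_le_rpow_Gamma_mul_rpow_Gamma (s := 1 + 1 / q) (t := 1 / q)
    (a := 1 - p / q) (b := p / q) (by linarith) ha (by linarith) hs (by ring)
  have e : (1 - p / q) * (1 + 1 / q) + p / q * (1 / q) = 1 + 1 / q - p / q := by ring
  have hG : 0 < Real.Gamma (1 / q) := Real.Gamma_pos_of_pos ha
  have hG1 : Real.Gamma (1 + 1 / q) = 1 / q * Real.Gamma (1 / q) := by
    rw [add_comm, Real.Gamma_add_one ha.ne']
  have hG2 : 0 < Real.Gamma (1 + 1 / q) := Real.Gamma_pos_of_pos (by linarith)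
  have hG3 : 0 < Real.Gamma (1 + 1 / q - p / q) := Real.Gamma_pos_of_pos (by linarith)
  have hG4 : Real.Gamma (1 / q) = q * Real.Gamma (1 + 1 / q) := by
    rw [hG1]; field_simp
  rw [e, hG4, mul_rpow hq.le hG2.le, mul_left_comm, ← rpow_add hG2, sub_add_cancel, rpow_one] at h
  rw [div_mul_eq_mul_div, one_le_div hG3]
  linarith

instance isProbabilityMeasure_gaussianMeasure (d : ℕ) :
    IsProbabilityMeasure (gaussianMeasure d) := by
  have hE : ∀ v : EuclideanSpace ℝ (Fin d), -‖v‖ ^ 2 / 2 = -(1 / 2 : ℝ) * ‖v‖ ^ 2 := fun v => by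
    ring
  have h2π : (0 : ℝ) < 2 * π := by positivity
  have hI : ∫ v : EuclideanSpace ℝ (Fin d), rexp (-(1 / 2 : ℝ) * ‖v‖ ^ 2)
      = (2 * π) ^ ((d : ℝ) / 2) := by
    rw [GaussianFourier.integral_rexp_neg_mul_sq_norm (by norm_num)]
    simp [mul_comm]
  have hint : Integrable (fun v : EuclideanSpace ℝ (Fin d) => rexp (-(1 / 2 : ℝ) * ‖v‖ ^ 2)) := by
    by_contra hn
    rw [integral_undef hn] at hI
    exact (rpow_pos_of_pos h2π _).ne hI
  constructor
  rw [gaussianMeasure, withDensity_apply _ MeasurableSet.univ, Measure.restrict_univ]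
  simp only [hE]
  rw [← ofReal_integral_eq_lintegral_ofReal (hint.const_mul _)
    (Filter.Eventually.of_forall fun v => by positivity), integral_const_mul, hI,
    ← rpow_add h2π]
  simp [neg_div]

/-- Homogeneity of `I_p`, combined with `integral_phi` for the normalized function. -/
lemma Ifun_eq {d : ℕ} {f : EuclideanSpace ℝ (Fin d) → ℝ} (hf : Measurable f) {a b m : ℝ}
    (ha : 0 < a) (hfa : ∀ x, a ≤ f x) (hfb : ∀ x, f x ≤ b) (hm : 0 < m)
    (hmean : ∫ x, f x ∂(gaussianMeasure d) = m) {p : ℝ} (hp : 0 < p) :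
    Ifun d p f = m ^ p * ∫ x, phi p (f x / m) ∂(gaussianMeasure d) := by
  have hu1 : ∫ x, f x / m ∂(gaussianMeasure d) = 1 := by
    rw [integral_div, hmean, div_self hm.ne']
  rw [(integral_phi (hf.div_const m) (div_pos ha hm) (fun x => by gcongr; exact hfa x)
    (fun x => div_le_div_of_nonneg_right (hfb x) hm.le) hu1 hp).2, Ifun, hmean]
  split_ifs with h
  · subst h
    rw [rpow_one, ← integral_const_mul]
    congr 1; ext x
    field_simp
  · have : ∀ x, (f x / m) ^ p = f x ^ p / m ^ p := fun x =>
      div_rpow (ha.le.trans (hfa x)) hm.le p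
    have hmp : 0 < m ^ p := rpow_pos_of_pos hm p
    simp only [this]
    rw [integral_div]
    field_simp

/-- Hölder-type inequality between the functionals `I_p` and `I_q`. -/
theorem holder_type_inequality (d : ℕ) (p q : ℝ) (hp : 0 < p) (hpq : p < q)
    (f g : EuclideanSpace ℝ (Fin d) → ℝ) (c : ℝ) (hc : 0 < c)
    (hg : ContDiff ℝ (⊤ : ℕ∞) g) (hg0 : ∀ x, 0 ≤ g x)
    (hbd : ∀ n : ℕ, ∃ C : ℝ, ∀ x, ‖iteratedFDeriv ℝ n g x‖ ≤ C)
    (hf : f = fun x => g x + c) :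
    Ifun d p f ≤
      (Real.Gamma (1 + 1 / q) / Real.Gamma (1 + 1 / q - p / q)) * q ^ (p / q) *
        (Ifun d q f) ^ (p / q) := by
  have hq : 0 < q := hp.trans hpq
  obtain ⟨C, hC⟩ := hbd 0
  have hcont : Continuous f := by
    rw [hf]; exact hg.continuous.add continuous_const
  have hfa : ∀ x, c ≤ f x := fun x => by rw [hf]; simp [hg0 x]
  have hfb : ∀ x, f x ≤ C + c := fun x => by
    have := hC x
    rw [norm_iteratedFDeriv_zero] at this
    rw [hf]
    linarith [le_abs_self (g x), Real.norm_eq_abs (g x)]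
  have hint : Integrable f (gaussianMeasure d) :=
    integrable_comp_of_bounded hcont.measurable hfa hfb (F := fun t => t) measurable_id
      continuousOn_id
  obtain ⟨m, hmean⟩ : ∃ m, ∫ x, f x ∂(gaussianMeasure d) = m := ⟨_, rfl⟩
  have hm : 0 < m := by
    have := integral_mono (integrable_const c) hint hfa
    simp [hmean] at this
    linarith
  have hu1 : ∫ x, f x / m ∂(gaussianMeasure d) = 1 := by
    rw [integral_div, hmean, div_self hm.ne']
  have hle := integral_phi_le (hcont.measurable.div_const m) (div_pos hc hm)
    (fun x => div_le_div_of_nonneg_right (hfa x) hm.le)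
    (fun x => div_le_div_of_nonneg_right (hfb x) hm.le) hu1 hp hpq
  have hQ : 0 ≤ ∫ x, phi q (f x / m) ∂(gaussianMeasure d) :=
    integral_nonneg fun x => phi_nonneg hq (div_pos (hc.trans_le (hfa x)) hm)
  have hmq : 0 ≤ m ^ q := rpow_nonneg hm.le q
  rw [Ifun_eq hcont.measurable hc hfa hfb hm hmean hp,
    Ifun_eq hcont.measurable hc hfa hfb hm hmean hq]
  calc m ^ p * ∫ x, phi p (f x / m) ∂(gaussianMeasure d)
      ≤ m ^ p * (∫ x, phi q (f x / m) ∂(gaussianMeasure d)) ^ (p / q) := by gcongr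
    _ = (m ^ q * ∫ x, phi q (f x / m) ∂(gaussianMeasure d)) ^ (p / q) := by
        rw [mul_rpow hmq hQ, ← rpow_mul hm.le, mul_div_cancel₀ _ hq.ne']
    _ ≤ _ := le_mul_of_one_le_left (rpow_nonneg (mul_nonneg hmq hQ) _)
        (one_le_gamma_const hp hpq)
end

section
/- For every f that is the sum of a nonnegative bounded smooth function on ℝ^d and a positive constant, one has the improved Beckner inequality at p = 4/3: ‖f‖_{4/3}^{4/3} − ‖f‖_1^{4/3} + (‖f‖_1^{2/3} − ‖f‖_{2/3}^{2/3})² ≤ (2/9) ∫_{ℝ^d} f^{−2/3} |∇f|² dγ_d, where γ_d is the standard Gaussian measure. -/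
/-!
The proof is a Bellman-function (heat-flow) argument. Write `h x = x ^ (2/3)`, `m = ∫ f`, and for a
real parameter `a` put
`M (x, η) = inf_{0 ≤ σ ≤ S} (h x - a + σ ^ 2) ^ 2 - (4/3) σ η` with `S` large.

* Completing squares gives `x ^ (4/3) - 2 a x ^ (2/3) - (2/9) x ^ (-2/3) η ^ 2 ≤ M (x, η)`
  (`le_val`), while the choice `σ = 0` gives `M (x, η) ≤ (h x - a) ^ 2`.
* Let `u t x = ∫ f (x + √(1 - t) g) dγ(g)` and `D t = ∇ (u t)`. Then
  `φ t = ∫ M (u t (√t z), √t ‖D t (√t z)‖) dγ(z)` satisfies `φ 1 ≤ φ t` for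
  `0 < t ≤ 1` (`bellman_one_le`).
  `M` is only an infimum of smooth functions, so no derivative of `φ` is taken. Instead one shows
  `φ (t + r ^ 2) ≤ φ t + O(r ^ 3)` (`bellman_step`): by the Gaussian semigroup property the
  left-hand side is an iterated average, in the inner average `M` is bounded by its defining
  expression at the minimiser `σ` belonging to time `t`, and that smooth expression is expanded to
  second order (`one_step`). With `b = σ ^ 2 - a` and `κ = ∂ₓ² (h x + b) ^ 2`, the second-order
  term is at most `κ r ^ 2 ‖D‖ ^ 2 / 2`, and it is compensated by the increase of the weight `√t`
  in `-(4/3) σ √t ‖D‖` because minimality of `σ` forces `κ η ≤ (4/3) σ` (`curv_mul_le`).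
  Summing `n` steps of length `O(1 / n)` and letting `n → ∞` gives the claim.
* `φ 1 = ∫ M (f, ‖∇f‖)`, and `limsup_{t → 0} φ t ≤ (m ^ (2/3) - a) ^ 2` (`bellman_one_le_mean`).
  Hence `∫ f ^ (4/3) - 2 a ∫ f ^ (2/3) - (2/9) ∫ f ^ (-2/3) ‖∇f‖ ^ 2 ≤ (m ^ (2/3) - a) ^ 2`, and
  `a = m ^ (2/3) - ∫ f ^ (2/3)` is the improved Beckner inequality (`Adm.beckner`).
-/

open MeasureTheory Real

namespace Beckner

open ProbabilityTheory

/-! ### The standard Gaussian measure -/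

lemma charFun_gaussianMeasure (d : ℕ) (t : EuclideanSpace ℝ (Fin d)) :
    charFun (gaussianMeasure d) t = Complex.exp (- ‖t‖ ^ 2 / 2) := by
  rw [charFun_apply, gaussianMeasure,
    integral_withDensity_eq_integral_toReal_smul (by fun_prop) (by simp)]
  have h := GaussianFourier.integral_cexp_neg_mul_sq_norm_add (V := EuclideanSpace ℝ (Fin d)) (b := (1 / 2 : ℂ))
    (by norm_num) Complex.I t
  have e : ∀ x : EuclideanSpace ℝ (Fin d),
      (ENNReal.ofReal ((2 * π) ^ (-(d : ℝ) / 2) * Real.exp (-‖x‖ ^ 2 / 2))).toReal •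
        Complex.exp (inner ℝ x t * Complex.I)
      = (((2 * π) ^ (-(d : ℝ) / 2) : ℝ) : ℂ) *
        Complex.exp (-(1 / 2 : ℂ) * ‖x‖ ^ 2 + Complex.I * inner ℝ t x) := by
    intro x
    rw [ENNReal.toReal_ofReal (by positivity), Complex.exp_add, Complex.real_smul,
      real_inner_comm]
    push_cast
    rw [mul_comm Complex.I]
    ring_nf
  simp_rw [e]
  rw [integral_const_mul, h, ← mul_assoc]
  have h2 : (((2 * π) ^ (-(d : ℝ) / 2) : ℝ) : ℂ) *
      (π / (1 / 2 : ℂ)) ^ ((Module.finrank ℝ (EuclideanSpace ℝ (Fin d)) : ℂ) / 2) = 1 := by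
    have : (π / (1 / 2 : ℂ)) ^ ((Module.finrank ℝ (EuclideanSpace ℝ (Fin d)) : ℂ) / 2)
        = (((2 * π) ^ ((d : ℝ) / 2) : ℝ) : ℂ) := by
      rw [Complex.ofReal_cpow (by positivity)]
      simp
      ring_nf
    rw [this, ← Complex.ofReal_mul, ← Real.rpow_add (by positivity)]
    simp [neg_div]
  rw [h2, one_mul, Complex.I_sq]
  congr 1
  ring

lemma gaussianMeasure_eq_stdGaussian (d : ℕ) :
    gaussianMeasure d = stdGaussian (EuclideanSpace ℝ (Fin d)) := by
  have : IsFiniteMeasure (gaussianMeasure d) := by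
    refine isFiniteMeasure_withDensity_ofReal ?_
    refine (Integrable.const_mul ?_ _).2
    have h := (GaussianFourier.integrable_cexp_neg_mul_sq_norm_add (V := EuclideanSpace ℝ (Fin d))
      (b := (1 / 2 : ℂ)) (by norm_num) 0 0).norm
    refine h.congr (Filter.Eventually.of_forall fun x => ?_)
    simp only [Complex.norm_exp]
    congr 1
    norm_cast
    simp
    norm_cast
    ring
  refine Measure.ext_of_charFun ?_
  ext t
  rw [charFun_gaussianMeasure, charFun_stdGaussian]

section
variable {E : Type*} [NormedAddCommGroup E] [InnerProductSpace ℝ E] [FiniteDimensional ℝ E]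
  [MeasurableSpace E] [BorelSpace E]

/-- If `z`, `g` are independent standard Gaussian vectors, then `√s z + √t g` has the law of
`√(s + t) x` with `x` standard Gaussian. -/
lemma map_prod_stdGaussian {s t : ℝ} (hs : 0 ≤ s) (ht : 0 ≤ t) :
    ((stdGaussian E).prod (stdGaussian E)).map (fun p : E × E => √s • p.1 + √t • p.2)
      = (stdGaussian E).map (fun x => √(s + t) • x) := by
  have : (fun p : E × E => √s • p.1 + √t • p.2)
      = (fun p : E × E => p.1 + p.2) ∘ (Prod.map (fun x => √s • x) (fun x => √t • x)) := rfl
  rw [this, ← Measure.map_map (by fun_prop) (by fun_prop),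
    ← Measure.map_prod_map _ _ (by fun_prop) (by fun_prop)]
  change Measure.conv _ _ = _
  refine Measure.ext_of_charFun ?_
  ext x
  rw [charFun_conv, charFun_map_smul, charFun_map_smul, charFun_map_smul]
  simp only [charFun_stdGaussian, norm_smul, ← Complex.exp_add, mul_pow, Complex.ofReal_mul,
    ← Complex.ofReal_pow, sq_abs, Real.norm_eq_abs, Real.sq_sqrt hs, Real.sq_sqrt ht,
    Real.sq_sqrt (add_nonneg hs ht)]
  push_cast
  ring_nf

/-- The semigroup property of Gaussian averages. -/
lemma integral_comp_prod_stdGaussian {W : Type*} [NormedAddCommGroup W] [NormedSpace ℝ W]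
    {s t : ℝ} (hs : 0 ≤ s) (ht : 0 ≤ t)
    {F : E → W} (hF : Continuous F) {C : ℝ} (hC : ∀ x, ‖F x‖ ≤ C) :
    ∫ z, ∫ g, F (√s • z + √t • g) ∂stdGaussian E ∂stdGaussian E
      = ∫ z, F (√(s + t) • z) ∂stdGaussian E := by
  rw [← integral_map (μ := stdGaussian E) (φ := fun x => √(s + t) • x) (by fun_prop)
    hF.aestronglyMeasurable, ← map_prod_stdGaussian hs ht,
    integral_map (by fun_prop) hF.aestronglyMeasurable, integral_prod]
  refine Integrable.of_bound (C := C) ?_ (Filter.Eventually.of_forall fun x => hC _)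
  exact (hF.comp (by fun_prop)).aestronglyMeasurable

lemma integrable_norm_pow_stdGaussian (n : ℕ) :
    Integrable (fun x : E => ‖x‖ ^ n) (stdGaussian E) := by
  rcases Nat.eq_zero_or_pos n with rfl | hn
  · simp
  · exact ((IsGaussian.memLp_id (stdGaussian E) n (by simp))).integrable_norm_pow hn.ne'

lemma integral_inner_sq_stdGaussian (y : E) :
    ∫ x, (inner ℝ y x) ^ 2 ∂stdGaussian E = ‖y‖ ^ 2 := by
  have h := variance_dual_stdGaussian (innerSL ℝ y)
  rw [variance_eq_integral (by fun_prop)] at h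
  rw [integral_strongDual_stdGaussian] at h
  simpa using h

end

/-! ### The Bellman function -/

/-- The function of `σ` minimised in the definition of the Bellman function. It is affine in the
gradient variable `η` and depends on `x` only through `(x ^ (2/3) + b) ^ 2` with `b = σ ^ 2 - a`. -/
noncomputable def cost (a x η σ : ℝ) : ℝ := (x ^ ((2 : ℝ) / 3) - a + σ ^ 2) ^ 2 - 4 / 3 * σ * η

/-- The Bellman function `M (x, η)`: the minimum of `cost a x η σ` over `0 ≤ σ ≤ S`. -/
noncomputable def val (a S x η : ℝ) : ℝ := sInf (cost a x η '' Set.Icc 0 S)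

lemma continuous_cost (a : ℝ) : Continuous fun p : (ℝ × ℝ) × ℝ => cost a p.1.1 p.1.2 p.2 := by
  unfold cost
  have : Continuous fun p : (ℝ × ℝ) × ℝ => p.1.1 ^ ((2 : ℝ) / 3) :=
    (Real.continuous_rpow_const (by norm_num)).comp (by fun_prop)
  fun_prop

lemma continuous_val (a S : ℝ) : Continuous fun p : ℝ × ℝ => val a S p.1 p.2 :=
  isCompact_Icc.continuous_sInf (f := fun (p : ℝ × ℝ) σ => cost a p.1 p.2 σ) (continuous_cost a)

lemma exists_val_eq (a x η : ℝ) {S : ℝ} (hS : 0 ≤ S) :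
    ∃ σ ∈ Set.Icc 0 S, val a S x η = cost a x η σ ∧
      ∀ σ' ∈ Set.Icc 0 S, cost a x η σ ≤ cost a x η σ' := by
  have hc : Continuous (cost a x η) :=
    (continuous_cost a).comp (f := fun σ => ((x, η), σ)) (by fun_prop)
  obtain ⟨σ, hσ, h1, h2⟩ := isCompact_Icc.exists_sInf_image_eq_and_le
    (Set.nonempty_Icc.2 hS) hc.continuousOn
  exact ⟨σ, hσ, h1, h2⟩

lemma val_le {a x η S σ : ℝ} (hσ : σ ∈ Set.Icc 0 S) : val a S x η ≤ cost a x η σ := by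
  obtain ⟨τ, hτ, h, h'⟩ := exists_val_eq a x η (hσ.1.trans hσ.2)
  exact h ▸ h' σ hσ

lemma rpow_four_thirds {x : ℝ} (hx : 0 < x) : x ^ ((4 : ℝ) / 3) = (x ^ ((2 : ℝ) / 3)) ^ 2 := by
  rw [← Real.rpow_natCast, ← Real.rpow_mul hx.le]; norm_num

/-- The terminal bound: the Bellman function dominates the integrand; for each `σ` the difference is
`(σ ^ 2 - a) ^ 2 + 2 h (σ - η / (3 h)) ^ 2` with `h = x ^ (2/3)`. -/
lemma le_val {a x η S : ℝ} (hS : 0 ≤ S) (hx : 0 < x) :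
    x ^ ((4 : ℝ) / 3) - 2 * a * x ^ ((2 : ℝ) / 3) - 2 / 9 * (x ^ (-(2 : ℝ) / 3) * η ^ 2)
      ≤ val a S x η := by
  obtain ⟨σ, -, h, -⟩ := exists_val_eq a x η hS
  rw [h, cost, rpow_four_thirds hx, neg_div, Real.rpow_neg hx.le]
  have hp : 0 < x ^ ((2 : ℝ) / 3) := by positivity
  set w := x ^ ((2 : ℝ) / 3)
  have : (w - a + σ ^ 2) ^ 2 - 4 / 3 * σ * η - (w ^ 2 - 2 * a * w - 2 / 9 * (w⁻¹ * η ^ 2))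
      = (σ ^ 2 - a) ^ 2 + 2 * w * (σ - η / (3 * w)) ^ 2 := by
    field_simp; ring
  have h2 : 0 ≤ (σ ^ 2 - a) ^ 2 + 2 * w * (σ - η / (3 * w)) ^ 2 := by positivity
  linarith

/-- The second derivative in `x` of `(x ^ (2/3) + b) ^ 2`, for `x > 0`. -/
noncomputable def curv (x b : ℝ) : ℝ :=
  4 / 9 * (x ^ ((2 : ℝ) / 3) - b) / (x ^ ((2 : ℝ) / 3)) ^ 2

/-- The key inequality: at a minimiser `σ`, the curvature times `η` is at most `(4/3) σ`. If `σ < S`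
this is the first-order condition `η ≤ 3 σ (h + b)`, multiplied by `h - b`. The right endpoint
`σ = S` gives no first-order condition, but there `b ≥ h`, so that the curvature is nonpositive. -/
lemma curv_mul_le {a x η S σ : ℝ} (hx : 0 < x) (hη : 0 ≤ η) (hS : x ^ ((2 : ℝ) / 3) + a ≤ S ^ 2)
    (hσ : σ ∈ Set.Icc 0 S) (hmin : ∀ σ' ∈ Set.Icc 0 S, cost a x η σ ≤ cost a x η σ') :
    curv x (σ ^ 2 - a) * η ≤ 4 / 3 * σ := by
  unfold curv
  have hp : 0 < x ^ ((2 : ℝ) / 3) := by positivity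
  unfold cost at hmin
  set w := x ^ ((2 : ℝ) / 3)
  obtain ⟨h0, h1⟩ := hσ
  by_cases hb : w ≤ σ ^ 2 - a
  · have : 4 / 9 * (w - (σ ^ 2 - a)) / w ^ 2 ≤ 0 :=
      div_nonpos_of_nonpos_of_nonneg (by linarith) (by positivity)
    nlinarith
  push Not at hb
  have hlt : σ < S := by
    rcases h1.lt_or_eq with h | h
    · exact h
    · subst h; linarith
  -- first-order condition at a minimiser that is not the right endpoint
  have hfo : η ≤ 3 * σ * (w - a + σ ^ 2) := by
    -- divide the minimality inequality at `σ + θ` by `θ` and let `θ` decrease to `0`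
    have ht : Filter.Tendsto (fun θ : ℝ => 2 * (w - a + σ ^ 2) * (2 * σ + θ)
        + θ * (2 * σ + θ) ^ 2 - 4 / 3 * η) (nhdsWithin 0 (Set.Ioi 0))
        (nhds (2 * (w - a + σ ^ 2) * (2 * σ + 0) + 0 * (2 * σ + 0) ^ 2 - 4 / 3 * η)) :=
      Filter.Tendsto.mono_left (Continuous.tendsto (by fun_prop) _) nhdsWithin_le_nhds
    have hnn := ge_of_tendsto ht (b := 0) (by
      filter_upwards [Ioc_mem_nhdsGT (sub_pos.2 hlt)] with θ hθ
      have h := hmin (σ + θ) ⟨by linarith [hθ.1], by linarith [hθ.2]⟩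
      refine le_of_mul_le_mul_left (?_ : θ * 0 ≤ _) hθ.1
      nlinarith [h])
    linarith
  rw [div_mul_eq_mul_div, div_le_iff₀ (by positivity)]
  nlinarith [mul_le_mul_of_nonneg_left hfo (sub_nonneg.2 hb.le), mul_nonneg h0 (sq_nonneg (σ ^ 2 - a))]

/-- Second-order Taylor expansion of `x ^ r` on `[c, ∞)`, with a uniform cubic remainder. -/
lemma rpow_taylor {c r : ℝ} (hc : 0 < c) (hr : r ≤ 3) {x z : ℝ} (hx : c ≤ x) (hz : c ≤ z) :
    |z ^ r - x ^ r - r * x ^ (r - 1) * (z - x) - r * (r - 1) * x ^ (r - 2) / 2 * (z - x) ^ 2|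
      ≤ |r * (r - 1) * (r - 2)| * c ^ (r - 3) * |z - x| ^ 3 := by
  set K := |r * (r - 1) * (r - 2)| * c ^ (r - 3) with hK
  have hK0 : 0 ≤ K := by positivity
  have hpos : ∀ u ∈ Set.uIcc x z, c ≤ u := fun u hu => (le_min hx hz).trans hu.1
  have hd : ∀ q : ℝ, ∀ u ∈ Set.uIcc x z, HasDerivAt (fun y : ℝ => y ^ q) (q * u ^ (q - 1)) u :=
    fun q u hu => Real.hasDerivAt_rpow_const (Or.inl (hc.trans_le (hpos u hu)).ne')
  have hxm : x ∈ Set.uIcc x z := Set.left_mem_uIcc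
  have hzm : z ∈ Set.uIcc x z := Set.right_mem_uIcc
  have hdist : ∀ u ∈ Set.uIcc x z, |u - x| ≤ |z - x| := fun u hu =>
    Set.abs_sub_left_of_mem_uIcc hu
  have hconv : Convex ℝ (Set.uIcc x z) := convex_uIcc x z
  have s1 : ∀ u ∈ Set.uIcc x z,
      |r * (r - 1) * u ^ (r - 2) - r * (r - 1) * x ^ (r - 2)| ≤ K * |z - x| := by
    intro u hu
    have := hconv.norm_image_sub_le_of_norm_hasDerivWithin_le
      (f := fun y : ℝ => r * (r - 1) * y ^ (r - 2))
      (f' := fun y => r * (r - 1) * ((r - 2) * y ^ (r - 2 - 1))) (C := K)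
      (fun y hy => ((hd _ y hy).const_mul _).hasDerivWithinAt) ?_ hxm hu
    · exact this.trans (mul_le_mul_of_nonneg_left (hdist u hu) hK0)
    · intro y hy
      have hy0 := hc.trans_le (hpos y hy)
      rw [← mul_assoc, norm_mul, Real.norm_eq_abs, Real.norm_eq_abs,
        abs_of_pos (Real.rpow_pos_of_pos hy0 _), hK]
      refine mul_le_mul_of_nonneg_left ?_ (abs_nonneg _)
      rw [show r - 2 - 1 = r - 3 by ring]
      exact Real.rpow_le_rpow_of_nonpos hc (hpos y hy) (by linarith)
  have s2 : ∀ u ∈ Set.uIcc x z,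
      |r * u ^ (r - 1) - r * x ^ (r - 1) - r * (r - 1) * x ^ (r - 2) * (u - x)|
        ≤ K * |z - x| ^ 2 := by
    intro u hu
    have := hconv.norm_image_sub_le_of_norm_hasDerivWithin_le
      (f := fun y : ℝ => r * y ^ (r - 1) - r * (r - 1) * x ^ (r - 2) * (y - x))
      (f' := fun y => r * ((r - 1) * y ^ (r - 1 - 1)) - r * (r - 1) * x ^ (r - 2) * 1)
      (C := K * |z - x|)
      (fun y hy => (((hd _ y hy).const_mul _).sub
        (((hasDerivAt_id y).sub_const x).const_mul _)).hasDerivWithinAt) ?_ hxm hu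
    · have h2 := this.trans (mul_le_mul_of_nonneg_left (hdist u hu) (by positivity))
      rw [Real.norm_eq_abs] at h2
      calc _ = _ := by congr 1; ring
        _ ≤ _ := h2
        _ = _ := by ring
    · intro y hy
      have := s1 y hy
      rw [Real.norm_eq_abs, show r - 1 - 1 = r - 2 by ring]
      calc _ = _ := by congr 1; ring
        _ ≤ _ := this
  have := hconv.norm_image_sub_le_of_norm_hasDerivWithin_le
      (f := fun y : ℝ => y ^ r - r * x ^ (r - 1) * (y - x)
        - r * (r - 1) * x ^ (r - 2) / 2 * (y - x) ^ 2)
      (f' := fun y => r * y ^ (r - 1) - r * x ^ (r - 1) * 1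
        - r * (r - 1) * x ^ (r - 2) / 2 * (2 * (y - x)))
      (C := K * |z - x| ^ 2)
      (fun y hy => ?_) ?_ hxm hzm
  · rw [Real.norm_eq_abs, Real.norm_eq_abs] at this
    calc _ = _ := by congr 1; ring
        _ ≤ _ := this
        _ = _ := by ring
  · have h1 : HasDerivAt (fun y : ℝ => y - x) 1 y := (hasDerivAt_id y).sub_const x
    have h2 : HasDerivAt (fun y : ℝ => (y - x) ^ 2) (2 * (y - x)) y := by
      convert! h1.pow 2 using 1; simp
    exact (((hd _ y hy).sub (h1.const_mul _)).sub (h2.const_mul _)).hasDerivWithinAt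
  · intro y hy
    have := s2 y hy
    rw [Real.norm_eq_abs]
    calc _ = _ := by congr 1; ring
      _ ≤ _ := this

/-- Second-order Taylor bound for `(x ^ (2/3) + b) ^ 2`, uniform in `|b| ≤ B` and `x ≥ c`. The slope
`l` is left unspecified: the linear term has mean zero where the bound is used. -/
lemma sq_taylor {c B : ℝ} (hc : 0 < c) (hB : 0 ≤ B) : ∃ K : ℝ, 0 ≤ K ∧ ∀ b x : ℝ, |b| ≤ B → c ≤ x →
    ∃ l : ℝ, ∀ z, c ≤ z → (z ^ ((2 : ℝ) / 3) + b) ^ 2 ≤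
      (x ^ ((2 : ℝ) / 3) + b) ^ 2 + l * (z - x) + curv x b / 2 * (z - x) ^ 2 + K * |z - x| ^ 3 := by
  refine ⟨|(4/3 : ℝ) * (4/3 - 1) * (4/3 - 2)| * c ^ ((4/3 : ℝ) - 3)
    + 2 * B * (|(2/3 : ℝ) * (2/3 - 1) * (2/3 - 2)| * c ^ ((2/3 : ℝ) - 3)), by positivity, ?_⟩
  intro b x hb hx
  refine ⟨(4/3 : ℝ) * x ^ ((4/3 : ℝ) - 1) + 2 * b * ((2/3 : ℝ) * x ^ ((2/3 : ℝ) - 1)), ?_⟩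
  intro z hz
  have hx0 := hc.trans_le hx
  have h1 := rpow_taylor (r := 4/3) hc (by norm_num) hx hz
  have h2 := rpow_taylor (r := 2/3) hc (by norm_num) hx hz
  rw [rpow_four_thirds hx0, rpow_four_thirds (hc.trans_le hz)] at h1
  have h2' := mul_le_mul (mul_le_mul_of_nonneg_left hb (by norm_num : (0:ℝ) ≤ 2)) h2
    (abs_nonneg _) (by positivity)
  have h3 := (le_abs_self _).trans h1
  have h4 := (le_abs_self (2 * b * (z ^ (2/3 : ℝ) - x ^ (2/3 : ℝ)
    - 2/3 * x ^ ((2/3 : ℝ) - 1) * (z - x)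
    - 2/3 * (2/3 - 1) * x ^ ((2/3 : ℝ) - 2) / 2 * (z - x) ^ 2))).trans
    (le_of_eq_of_le (by rw [abs_mul, abs_mul, abs_two]) h2')
  have hcurv : curv x b = (4/3 : ℝ) * (4/3 - 1) * x ^ ((4/3 : ℝ) - 2)
      + 2 * b * ((2/3 : ℝ) * (2/3 - 1) * x ^ ((2/3 : ℝ) - 2)) := by
    unfold curv
    have e1 : x ^ ((4/3 : ℝ) - 2) = (x ^ ((2 : ℝ) / 3))⁻¹ := by
      rw [← Real.rpow_neg hx0.le]; norm_num
    have e2 : x ^ ((2/3 : ℝ) - 2) = ((x ^ ((2 : ℝ) / 3)) ^ 2)⁻¹ := by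
      rw [← rpow_four_thirds hx0, ← Real.rpow_neg hx0.le]; norm_num
    rw [e1, e2]
    have : 0 < x ^ ((2 : ℝ) / 3) := by positivity
    field_simp; ring
  rw [hcurv]
  nlinarith [h3, h4]

lemma curv_le {a b c x : ℝ} (hc : 0 < c) (hx : c ≤ x) (hb : -|a| ≤ b) :
    curv x b ≤ 4 / 9 * ((c ^ ((2 : ℝ) / 3))⁻¹ + |a| * ((c ^ ((2 : ℝ) / 3)) ^ 2)⁻¹) := by
  have h0 : 0 < c ^ ((2 : ℝ) / 3) := by positivity
  have h1 : c ^ ((2 : ℝ) / 3) ≤ x ^ ((2 : ℝ) / 3) := Real.rpow_le_rpow hc.le hx (by norm_num)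
  unfold curv
  set w := x ^ ((2 : ℝ) / 3)
  have hw : 0 < w := h0.trans_le h1
  calc 4 / 9 * (w - b) / w ^ 2 ≤ 4 / 9 * (w + |a|) / w ^ 2 := by gcongr; linarith
    _ = 4 / 9 * (w⁻¹ + |a| * (w ^ 2)⁻¹) := by field_simp
    _ ≤ _ := by gcongr

/-! ### Functions with bounded derivatives and their Gaussian averages -/

section
set_option linter.unusedSectionVars false
variable {E : Type*} [NormedAddCommGroup E] [InnerProductSpace ℝ E] [FiniteDimensional ℝ E]
  [MeasurableSpace E] [BorelSpace E]

/-- A quantitative `C²` class, closed under Gaussian averaging: `v` takes values in `[c, C]`, and `D`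
(the gradient of `v`) is bounded by `L`, is `K`-Lipschitz, and approximates `v` to first order with
error `K ‖k‖ ^ 2`. -/
structure Adm (c C L K : ℝ) (v : E → ℝ) (D : E → E) : Prop where
  cv : Continuous v
  cD : Continuous D
  lb : ∀ x, c ≤ v x
  ub : ∀ x, v x ≤ C
  nD : ∀ x, ‖D x‖ ≤ L
  tay : ∀ x k, |v (x + k) - v x - inner ℝ (D x) k| ≤ K * ‖k‖ ^ 2
  lip : ∀ x k, ‖D (x + k) - D x‖ ≤ K * ‖k‖

lemma integrable_stdGaussian_of_bounded {W : Type*} [NormedAddCommGroup W] {F : E → W}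
    (hF : Continuous F) {B : ℝ} (hB : ∀ x, ‖F x‖ ≤ B) : Integrable F (stdGaussian E) := by
  have : SecondCountableTopology E := inferInstance
  exact Integrable.of_bound (hF.aestronglyMeasurable) B (Filter.Eventually.of_forall hB)

lemma continuous_average {W : Type*} [NormedAddCommGroup W] [NormedSpace ℝ W] {F : E → W}
    (hF : Continuous F) {B : ℝ} (hB : ∀ x, ‖F x‖ ≤ B) (s : ℝ) :
    Continuous fun x => ∫ g, F (x + s • g) ∂stdGaussian E := by
  refine continuous_of_dominated (bound := fun _ => B) (fun x => ?_) (fun x => ?_)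
    (integrable_const B) ?_
  · exact (hF.comp (by fun_prop)).aestronglyMeasurable
  · exact Filter.Eventually.of_forall fun g => hB _
  · exact Filter.Eventually.of_forall fun g => hF.comp (by fun_prop)

variable {c C L K : ℝ} {v : E → ℝ} {D : E → E}

lemma Adm.abs_le (h : Adm c C L K v D) (x : E) : ‖v x‖ ≤ |c| + |C| := by
  have := h.lb x
  have := h.ub x
  rw [Real.norm_eq_abs, _root_.abs_le]
  constructor <;> linarith [neg_abs_le c, le_abs_self C, abs_nonneg c, abs_nonneg C]

lemma Adm.L_nonneg (h : Adm c C L K v D) : 0 ≤ L := (norm_nonneg _).trans (h.nD 0)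

lemma Adm.integrable_v (h : Adm c C L K v D) (s : ℝ) (x : E) :
    Integrable (fun g => v (x + s • g)) (stdGaussian E) :=
  integrable_stdGaussian_of_bounded (h.cv.comp (by fun_prop)) fun _ => h.abs_le _

lemma Adm.integrable_D (h : Adm c C L K v D) (s : ℝ) (x : E) :
    Integrable (fun g => D (x + s • g)) (stdGaussian E) :=
  integrable_stdGaussian_of_bounded (h.cD.comp (by fun_prop)) fun _ => h.nD _

lemma Adm.average (h : Adm c C L K v D) (s : ℝ) :
    Adm c C L K (fun x => ∫ g, v (x + s • g) ∂stdGaussian E)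
      (fun x => ∫ g, D (x + s • g) ∂stdGaussian E) where
  cv := continuous_average h.cv h.abs_le s
  cD := continuous_average h.cD h.nD s
  lb x := by
    simpa using integral_mono (integrable_const c) (h.integrable_v s x) fun g => h.lb _
  ub x := by
    simpa using integral_mono (h.integrable_v s x) (integrable_const C) fun g => h.ub _
  nD x := by
    simpa using norm_integral_le_of_norm_le_const (μ := stdGaussian E)
      (Filter.Eventually.of_forall fun g => h.nD (x + s • g))
  tay x k := by
    have e : (∫ g, v (x + k + s • g) ∂stdGaussian E) - (∫ g, v (x + s • g) ∂stdGaussian E)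
        - inner ℝ (∫ g, D (x + s • g) ∂stdGaussian E) k
        = ∫ g, (v (x + s • g + k) - v (x + s • g) - inner ℝ (D (x + s • g)) k) ∂stdGaussian E := by
      have hi : Integrable (fun g => inner ℝ k (D (x + s • g))) (stdGaussian E) :=
        (h.integrable_D s x).const_inner k
      have hv := h.integrable_v s (x + k)
      have h2 := integral_inner (𝕜 := ℝ) (h.integrable_D s x) k
      simp_rw [add_right_comm x _ k, real_inner_comm k] at hv hi h2 ⊢
      have hd : Integrable (fun g => v (x + k + s • g) - v (x + s • g)) (stdGaussian E) :=
        hv.sub (h.integrable_v s x)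
      rw [integral_sub hd hi, integral_sub hv (h.integrable_v s x), h2]
    rw [e]
    simpa using norm_integral_le_of_norm_le_const (μ := stdGaussian E)
      (Filter.Eventually.of_forall fun g => (Real.norm_eq_abs _).trans_le (h.tay (x + s • g) k))
  lip x k := by
    have hD := h.integrable_D s (x + k)
    simp_rw [add_right_comm x k] at hD ⊢
    rw [← integral_sub hD (h.integrable_D s x)]
    simpa using norm_integral_le_of_norm_le_const (μ := stdGaussian E)
      (Filter.Eventually.of_forall fun g => h.lip (x + s • g) k)

lemma Adm.abs_sub_le (h : Adm c C L K v D) {r : ℝ} (hr0 : 0 ≤ r) (hr1 : r ≤ 1) (hK : 0 ≤ K)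
    (x g : E) : |v (x + r • g) - v x| ≤ r * ((L + K) * (1 + ‖g‖ ^ 2)) := by
  have h1 := h.tay x (r • g)
  have h2 := (abs_real_inner_le_norm (D x) (r • g)).trans
    (mul_le_mul_of_nonneg_right (h.nD x) (norm_nonneg _))
  rw [norm_smul, Real.norm_eq_abs, abs_of_nonneg hr0] at h1 h2
  have h3 : |v (x + r • g) - v x| ≤ L * (r * ‖g‖) + K * (r * ‖g‖) ^ 2 := by
    have := abs_add_le (v (x + r • g) - v x - inner ℝ (D x) (r • g)) (inner ℝ (D x) (r • g))
    rw [sub_add_cancel] at this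
    linarith
  refine h3.trans ?_
  have hL := h.L_nonneg
  have hg := norm_nonneg g
  have h4 : ‖g‖ ≤ 1 + ‖g‖ ^ 2 := by nlinarith [sq_nonneg (‖g‖ - 1)]
  have h5 : (r * ‖g‖) ^ 2 ≤ r * (1 + ‖g‖ ^ 2) := by
    rw [mul_pow]
    have : r ^ 2 ≤ r := by nlinarith
    gcongr
    linarith
  calc L * (r * ‖g‖) + K * (r * ‖g‖) ^ 2 ≤ L * (r * (1 + ‖g‖ ^ 2)) + K * (r * (1 + ‖g‖ ^ 2)) := by
        gcongr
    _ = _ := by ring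

lemma Adm.sq_sub_le (h : Adm c C L K v D) {r : ℝ} (hr0 : 0 ≤ r) (hr1 : r ≤ 1)
    (x g : E) : (v (x + r • g) - v x) ^ 2 ≤ r ^ 2 * (inner ℝ (D x) g) ^ 2
      + r ^ 3 * (2 * L * K * ‖g‖ ^ 3 + K ^ 2 * ‖g‖ ^ 4) := by
  have h1 := h.tay x (r • g)
  have h2 := (abs_real_inner_le_norm (D x) g).trans
    (mul_le_mul_of_nonneg_right (h.nD x) (norm_nonneg _))
  rw [norm_smul, Real.norm_eq_abs, abs_of_nonneg hr0, real_inner_smul_right] at h1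
  set p := inner ℝ (D x) g
  set w := v (x + r • g) - v x
  have hL := h.L_nonneg
  have hg := norm_nonneg g
  have e : w ^ 2 = r ^ 2 * p ^ 2 + 2 * (r * p) * (w - r * p) + (w - r * p) ^ 2 := by ring
  have e1 : 2 * (r * p) * (w - r * p) ≤ 2 * (r * (L * ‖g‖)) * (K * (r * ‖g‖) ^ 2) := by
    refine (le_abs_self _).trans ?_
    rw [abs_mul, abs_mul, abs_mul, abs_two, abs_of_nonneg hr0]
    gcongr
  have e2 : (w - r * p) ^ 2 ≤ (K * (r * ‖g‖) ^ 2) ^ 2 := by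
    rw [← sq_abs]; gcongr
  have e3 : r ^ 4 * (K ^ 2 * ‖g‖ ^ 4) ≤ r ^ 3 * (K ^ 2 * ‖g‖ ^ 4) := by
    gcongr ?_ * _
    exact pow_le_pow_of_le_one hr0 hr1 (by norm_num)
  calc w ^ 2 ≤ r ^ 2 * p ^ 2 + 2 * (r * (L * ‖g‖)) * (K * (r * ‖g‖) ^ 2)
        + (K * (r * ‖g‖) ^ 2) ^ 2 := by linarith
    _ = r ^ 2 * p ^ 2 + r ^ 3 * (2 * L * K * ‖g‖ ^ 3) + r ^ 4 * (K ^ 2 * ‖g‖ ^ 4) := by ring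
    _ ≤ _ := by linarith

/-- Under Gaussian averaging at scale `r`, the variance of `v` is at most `r ^ 2` times the squared norm
of the averaged gradient up to `O(r ^ 3)`, and the third absolute central moment is `O(r ^ 3)`. The
constant depends on `v` only through the parameters of `Adm`. -/
lemma moment_bounds (E : Type*) [NormedAddCommGroup E] [InnerProductSpace ℝ E]
    [FiniteDimensional ℝ E] [MeasurableSpace E] [BorelSpace E] (c C L : ℝ) {K : ℝ} (hK : 0 ≤ K) :
    ∃ Q : ℝ, 0 ≤ Q ∧ ∀ (v : E → ℝ) (D : E → E), Adm c C L K v D → ∀ r : ℝ, 0 ≤ r → r ≤ 1 →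
      ∀ x : E, ∀ X : ℝ, X = ∫ g, v (x + r • g) ∂stdGaussian E →
        (∫ g, (v (x + r • g) - X) ^ 2 ∂stdGaussian E
          ≤ r ^ 2 * ‖∫ g, D (x + r • g) ∂stdGaussian E‖ ^ 2 + Q * r ^ 3) ∧
        ∫ g, |v (x + r • g) - X| ^ 3 ∂stdGaussian E ≤ Q * r ^ 3 := by
  have I := fun n => integrable_norm_pow_stdGaussian (E := E) n
  set m : ℕ → ℝ := fun n => ∫ g : E, ‖g‖ ^ n ∂stdGaussian E with hm
  have hm0 : ∀ n, 0 ≤ m n := fun n => integral_nonneg fun g => by positivity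
  have I3 : Integrable (fun g : E => ((L + K) * (2 + m 2 + ‖g‖ ^ 2)) ^ 3) (stdGaussian E) := by
    have : (fun g : E => ((L + K) * (2 + m 2 + ‖g‖ ^ 2)) ^ 3) = fun g : E =>
        (L + K) ^ 3 * ((2 + m 2) ^ 3 + 3 * (2 + m 2) ^ 2 * ‖g‖ ^ 2 + 3 * (2 + m 2) * ‖g‖ ^ 4
          + ‖g‖ ^ 6) := by
      funext g; ring
    rw [this]
    exact ((((integrable_const _).add ((I 2).const_mul _)).add ((I 4).const_mul _)).add
      (I 6)).const_mul _
  set Q3 : ℝ := ∫ g : E, ((L + K) * (2 + m 2 + ‖g‖ ^ 2)) ^ 3 ∂stdGaussian E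
  set Q2 : ℝ := 2 * L * K * m 3 + K ^ 2 * m 4 + 2 * L * (K * m 1)
  refine ⟨|Q2| + |Q3|, by positivity, ?_⟩
  intro v D h r hr0 hr1 x X hX
  have hL := h.L_nonneg
  have hv := h.integrable_v r x
  have hc1 : Continuous fun g => v (x + r • g) := h.cv.comp (by fun_prop)
  have hlin : ∀ y : ℝ, Integrable (fun g => (v (x + r • g) - y) ^ 2) (stdGaussian E) := fun y =>
    integrable_stdGaussian_of_bounded (B := (|c| + |C| + |y|) ^ 2)
      ((hc1.sub continuous_const).pow 2) fun g => by
      rw [norm_pow]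
      gcongr
      exact (norm_sub_le _ _).trans (add_le_add (h.abs_le _) le_rfl)
  have hXv : |X - v x| ≤ r * ((L + K) * (1 + m 2)) := by
    have e : X - v x = ∫ g, (v (x + r • g) - v x) ∂stdGaussian E := by
      rw [integral_sub hv (integrable_const _), hX]; simp
    rw [e]
    refine (abs_integral_le_integral_abs).trans ?_
    refine (integral_mono_of_nonneg (Filter.Eventually.of_forall fun g => abs_nonneg _)
      ((((integrable_const 1).add (I 2)).const_mul (L + K)).const_mul r)
      (Filter.Eventually.of_forall fun g => h.abs_sub_le hr0 hr1 hK x g)).trans_eq ?_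
    simp only [Pi.add_apply]
    rw [integral_const_mul, integral_const_mul, integral_add (integrable_const _) (I 2)]
    simp [hm]
  constructor
  · -- the variance is at most the second moment about `v x`
    have e1 : ∫ g, (v (x + r • g) - X) ^ 2 ∂stdGaussian E
        ≤ ∫ g, (v (x + r • g) - v x) ^ 2 ∂stdGaussian E := by
      have e : ∀ g, (v (x + r • g) - X) ^ 2 = (v (x + r • g) - v x) ^ 2
          - 2 * (X - v x) * (v (x + r • g)) + (X ^ 2 - v x ^ 2) := fun g => by ring
      simp_rw [e]
      have hd : Integrable (fun g => (v (x + r • g) - v x) ^ 2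
          - 2 * (X - v x) * v (x + r • g)) (stdGaussian E) := (hlin _).sub (hv.const_mul _)
      rw [integral_add hd (integrable_const _), integral_sub (hlin _) (hv.const_mul _), integral_const_mul, ← hX]
      simp
      nlinarith [sq_nonneg (X - v x)]
    have e2 : ∫ g, (v (x + r • g) - v x) ^ 2 ∂stdGaussian E
        ≤ r ^ 2 * ‖D x‖ ^ 2 + r ^ 3 * (2 * L * K * m 3 + K ^ 2 * m 4) := by
      have Ii : Integrable (fun g => (inner ℝ (D x) g) ^ 2) (stdGaussian E) := by
        refine ((I 2).const_mul (L ^ 2)).mono' (by fun_prop)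
          (Filter.Eventually.of_forall fun g => ?_)
        rw [Real.norm_eq_abs, abs_pow, ← mul_pow]
        gcongr
        exact (abs_real_inner_le_norm (D x) g).trans
          (mul_le_mul_of_nonneg_right (h.nD x) (norm_nonneg _))
      have I34 : Integrable (fun g : E => 2 * L * K * ‖g‖ ^ 3 + K ^ 2 * ‖g‖ ^ 4)
          (stdGaussian E) := (((I 3).const_mul (2 * L * K)).add ((I 4).const_mul (K ^ 2)))
      refine (integral_mono (hlin _) ((Ii.const_mul (r ^ 2)).add (I34.const_mul (r ^ 3)))
        fun g => h.sq_sub_le hr0 hr1 x g).trans_eq ?_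
      simp only [Pi.add_apply]
      rw [integral_add (Ii.const_mul (r ^ 2)) (I34.const_mul (r ^ 3)), integral_const_mul,
        integral_const_mul, integral_inner_sq_stdGaussian, integral_add ((I 3).const_mul _) ((I 4).const_mul _),
integral_const_mul, integral_const_mul]
    have e3 : ‖D x‖ ≤ ‖∫ g, D (x + r • g) ∂stdGaussian E‖ + r * (K * m 1) := by
      have e : (∫ g, D (x + r • g) ∂stdGaussian E) - D x
          = ∫ g, (D (x + r • g) - D x) ∂stdGaussian E := by
        rw [integral_sub (h.integrable_D r x) (integrable_const _)]; simp
      have e' : ‖(∫ g, D (x + r • g) ∂stdGaussian E) - D x‖ ≤ r * (K * m 1) := by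
        rw [e]
        refine (norm_integral_le_of_norm_le (((I 1).const_mul K).const_mul r)
          (Filter.Eventually.of_forall fun g => ?_)).trans_eq ?_
        · refine (h.lip x (r • g)).trans_eq ?_
          rw [norm_smul, Real.norm_eq_abs, abs_of_nonneg hr0]; ring
        · rw [integral_const_mul, integral_const_mul]
      have := norm_sub_norm_le (D x) (∫ g, D (x + r • g) ∂stdGaussian E)
      rw [norm_sub_rev] at this
      linarith
    have e4 := (h.average r).nD x
    set n := ‖∫ g, D (x + r • g) ∂stdGaussian E‖
    have e5 : ‖D x‖ ^ 2 ≤ n ^ 2 + 2 * L * (r * (K * m 1)) := by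
      have := h.nD x
      have hn : 0 ≤ n := norm_nonneg _
      have hs : 0 ≤ r * (K * m 1) := mul_nonneg hr0 (mul_nonneg hK (hm0 1))
      nlinarith [norm_nonneg (D x)]
    have hr3 : 0 ≤ r ^ 3 := by positivity
    calc _ ≤ _ := e1
      _ ≤ _ := e2
      _ ≤ r ^ 2 * (n ^ 2 + 2 * L * (r * (K * m 1))) + r ^ 3 * (2 * L * K * m 3 + K ^ 2 * m 4) := by
        gcongr
      _ = r ^ 2 * n ^ 2 + Q2 * r ^ 3 := by simp only [Q2]; ring
      _ ≤ _ := by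
        gcongr
        linarith [le_abs_self Q2, abs_nonneg Q3]
  · have hb : ∀ g, |v (x + r • g) - X| ^ 3
        ≤ r ^ 3 * ((L + K) * (2 + m 2 + ‖g‖ ^ 2)) ^ 3 := fun g => by
      rw [← mul_pow]
      gcongr
      have h1 := h.abs_sub_le hr0 hr1 hK x g
      have h2 := abs_sub_le (v (x + r • g)) (v x) X
      rw [abs_sub_comm (v x) X] at h2
      linarith
    refine (integral_mono_of_nonneg (Filter.Eventually.of_forall fun g => by positivity)
      (I3.const_mul _) (Filter.Eventually.of_forall hb)).trans ?_
    rw [integral_const_mul, mul_comm]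
    gcongr
    linarith [le_abs_self Q3, abs_nonneg Q2]

end

/-! ### One step of the heat flow -/

lemma sqrt_add_sq_lower {q r : ℝ} (hq : 0 < q) :
    q + r ^ 2 / (2 * q) - r ^ 4 / (8 * q ^ 3) ≤ √(q ^ 2 + r ^ 2) := by
  have hs0 : q ≤ √(q ^ 2 + r ^ 2) := Real.le_sqrt_of_sq_le (by nlinarith [sq_nonneg r])
  have hs := Real.sq_sqrt (by positivity : 0 ≤ q ^ 2 + r ^ 2)
  set s := √(q ^ 2 + r ^ 2)
  obtain ⟨δ, rfl⟩ : ∃ δ, r ^ 2 = δ := ⟨_, rfl⟩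
  have e4 : r ^ 4 = (r ^ 2) ^ 2 := by ring
  have er : r ^ 2 = (s - q) * (s + q) := by linarith
  rw [e4, er]
  have : s - (q + (s - q) * (s + q) / (2 * q) - ((s - q) * (s + q)) ^ 2 / (8 * q ^ 3))
      = (s - q) ^ 2 * ((s + q) ^ 2 - (2 * q) ^ 2) / (8 * q ^ 3) := by
    field_simp; ring
  have h2 : 0 ≤ (s - q) ^ 2 * ((s + q) ^ 2 - (2 * q) ^ 2) / (8 * q ^ 3) := by
    apply div_nonneg (mul_nonneg (sq_nonneg _) _) (by positivity)
    nlinarith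
  linarith

/-- The balance between the second-order term and the growth of the weight `q = √t` to
`√(q ^ 2 + r ^ 2)`. Here `n` is the norm of the averaged gradient, `V` and `T` are the second and
third central moments, and `hfo` is the conclusion of `curv_mul_le`. -/
lemma step_arith {κ κ0 V T Q K' n L σ S q q0 r : ℝ} (hV0 : 0 ≤ V) (hV : V ≤ r ^ 2 * n ^ 2 + Q * r ^ 3)
    (hT : T ≤ Q * r ^ 3) (hQ : 0 ≤ Q) (hK' : 0 ≤ K') (hn : 0 ≤ n) (hnL : n ≤ L) (hσ : 0 ≤ σ)
    (hσS : σ ≤ S) (hq0 : 0 < q0) (hq : q0 ≤ q) (hr0 : 0 ≤ r) (hr1 : r ≤ 1) (hκ : κ ≤ κ0)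
    (hκ0 : 0 ≤ κ0) (hfo : κ * (q * n) ≤ 4 / 3 * σ) :
    κ / 2 * V + K' * T - 4 / 3 * σ * (√(q ^ 2 + r ^ 2) * n) ≤
      - (4 / 3 * σ * (q * n)) + (κ0 / 2 * Q + K' * Q + 1 / 6 * S * L / q0 ^ 3) * r ^ 3 := by
  have hqp := hq0.trans_le hq
  have hr3 : 0 ≤ r ^ 3 := by positivity
  have hS := hσ.trans hσS
  have hL := hn.trans hnL
  have hT' : K' * T ≤ K' * Q * r ^ 3 := by
    rw [mul_assoc]; exact mul_le_mul_of_nonneg_left hT hK'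
  have hP : 0 ≤ κ0 / 2 * Q * r ^ 3 := by positivity
  have hR : 0 ≤ 1 / 6 * S * L / q0 ^ 3 * r ^ 3 := by positivity
  have hσn : 0 ≤ 4 / 3 * σ * n := by positivity
  rcases le_total κ 0 with hκn | hκp
  · have h1 : κ / 2 * V ≤ 0 := mul_nonpos_of_nonpos_of_nonneg (by linarith) hV0
    have hs0 : q ≤ √(q ^ 2 + r ^ 2) := Real.le_sqrt_of_sq_le (by nlinarith [sq_nonneg r])
    nlinarith [mul_le_mul_of_nonneg_left hs0 hσn]
  · have h1 : κ / 2 * V ≤ κ / 2 * (r ^ 2 * n ^ 2) + κ0 / 2 * Q * r ^ 3 := by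
      have : κ * (Q * r ^ 3) ≤ κ0 * (Q * r ^ 3) := mul_le_mul_of_nonneg_right hκ (by positivity)
      have := mul_le_mul_of_nonneg_left hV (by linarith : 0 ≤ κ / 2)
      linarith
    have h2 : κ / 2 * (r ^ 2 * n ^ 2) ≤ 4 / 3 * σ * n * (r ^ 2 / (2 * q)) := by
      have e : κ / 2 * (r ^ 2 * n ^ 2) = κ * (q * n) * (n * (r ^ 2 / (2 * q))) := by field_simp
      rw [e]
      calc _ ≤ 4 / 3 * σ * (n * (r ^ 2 / (2 * q))) := by gcongr
        _ = _ := by ring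
    have h3 := mul_le_mul_of_nonneg_left (sqrt_add_sq_lower (r := r) hqp) hσn
    have h4 : 4 / 3 * σ * n * (r ^ 4 / (8 * q ^ 3)) ≤ 1 / 6 * S * L / q0 ^ 3 * r ^ 3 := by
      calc 4 / 3 * σ * n * (r ^ 4 / (8 * q ^ 3)) ≤ 4 / 3 * S * L * (r ^ 3 / (8 * q0 ^ 3)) := by
            gcongr ?_ * (?_ / ?_)
            · gcongr
            · exact pow_le_pow_of_le_one hr0 hr1 (by norm_num)
            · gcongr
        _ = _ := by field_simp; ring
    nlinarith

section
set_option linter.unusedSectionVars false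
variable {E : Type*} [NormedAddCommGroup E] [InnerProductSpace ℝ E] [FiniteDimensional ℝ E]
  [MeasurableSpace E] [BorelSpace E]

lemma exists_val_bound (a S c C L : ℝ) : ∃ B : ℝ, ∀ x ∈ Set.Icc c C, ∀ η ∈ Set.Icc 0 L,
    ‖val a S x η‖ ≤ B := by
  obtain ⟨B, hB⟩ := (isCompact_Icc.prod isCompact_Icc : IsCompact
    (Set.Icc c C ×ˢ Set.Icc 0 L)).exists_bound_of_continuousOn (continuous_val a S).continuousOn
  exact ⟨B, fun x hx η hη => hB (x, η) ⟨hx, hη⟩⟩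

lemma continuous_val_comp {v : E → ℝ} {D : E → E} (hv : Continuous v) (hD : Continuous D)
    (a S q : ℝ) : Continuous fun x => val a S (v x) (q * ‖D x‖) :=
  (continuous_val a S).comp (f := fun x => (v x, q * ‖D x‖)) (by fun_prop)

/-- The one-step inequality at a fixed point `x`, with `q = √t` and time increment `r ^ 2`. -/
lemma one_step {a S c C L K : ℝ} (hc : 0 < c) (hK : 0 ≤ K) (hS : 0 ≤ S)
    (hSC : C ^ ((2 : ℝ) / 3) + |a| ≤ S ^ 2) {q0 : ℝ} (hq0 : 0 < q0) :
    ∃ M : ℝ, ∀ (v : E → ℝ) (D : E → E), Adm c C L K v D → ∀ q r : ℝ, q0 ≤ q → 0 ≤ r → r ≤ 1 →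
      ∀ x : E, ∫ g, val a S (v (x + r • g)) (√(q ^ 2 + r ^ 2) * ‖D (x + r • g)‖) ∂stdGaussian E
        ≤ val a S (∫ g, v (x + r • g) ∂stdGaussian E)
            (q * ‖∫ g, D (x + r • g) ∂stdGaussian E‖) + M * r ^ 3 := by
  obtain ⟨Q, hQ, hmom⟩ := moment_bounds E c C L hK
  obtain ⟨K', hK', htay⟩ := sq_taylor (c := c) (B := S ^ 2 + |a|) hc (by positivity)
  set κ0 := 4 / 9 * ((c ^ ((2 : ℝ) / 3))⁻¹ + |a| * ((c ^ ((2 : ℝ) / 3)) ^ 2)⁻¹) with hκ0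
  refine ⟨κ0 / 2 * Q + K' * Q + 1 / 6 * S * L / q0 ^ 3, ?_⟩
  intro v D h q r hq hr0 hr1 x
  have hA := h.average r
  obtain ⟨h1, h2⟩ := hmom v D h r hr0 hr1 x _ rfl
  have hXl := hA.lb x
  have hXu := hA.ub x
  have hDL := hA.nD x
  have hiv := h.integrable_v r x
  have hiD := (h.integrable_D r x).norm
  have hnD := norm_integral_le_integral_norm (μ := stdGaussian E) (fun g => D (x + r • g))
  have hXe : ∫ g, v (x + r • g) ∂stdGaussian E = ∫ g, v (x + r • g) ∂stdGaussian E := rfl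
  beta_reduce at hXl hXu hDL
  set X := ∫ g, v (x + r • g) ∂stdGaussian E with hX
  set n := ‖∫ g, D (x + r • g) ∂stdGaussian E‖ with hn
  have hX0 := hc.trans_le hXl
  have hn0 : 0 ≤ n := norm_nonneg _
  have hq' := hq0.trans_le hq
  obtain ⟨σ, hσ, hval, hmin⟩ := exists_val_eq a X (q * n) hS
  have hXC : X ^ ((2 : ℝ) / 3) + a ≤ S ^ 2 := by
    have := Real.rpow_le_rpow hX0.le hXu (by norm_num : (0 : ℝ) ≤ 2 / 3)
    linarith [le_abs_self a]
  have hfo := curv_mul_le hX0 (by positivity) hXC hσ hmin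
  have hσ2 : σ ^ 2 ≤ S ^ 2 := pow_le_pow_left₀ hσ.1 hσ.2 2
  set b := σ ^ 2 - a with hb
  have hbB : |b| ≤ S ^ 2 + |a| := by
    rw [abs_le]; constructor <;> linarith [neg_abs_le a, le_abs_self a, sq_nonneg σ, sq_nonneg S]
  have hκ : curv X b ≤ κ0 := curv_le hc hXl (by linarith [le_abs_self a, sq_nonneg σ])
  obtain ⟨l, hl⟩ := htay b X hbB hXl
  set s := √(q ^ 2 + r ^ 2) with hs
  have hs0 : 0 ≤ s := Real.sqrt_nonneg _
  -- the minimiser at the averaged point is a competitor at the nearby points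
  have hpt : ∀ g, val a S (v (x + r • g)) (s * ‖D (x + r • g)‖) ≤
      (X ^ ((2 : ℝ) / 3) + b) ^ 2 + l * (v (x + r • g) - X) + curv X b / 2 * (v (x + r • g) - X) ^ 2
        + K' * |v (x + r • g) - X| ^ 3 - 4 / 3 * σ * s * ‖D (x + r • g)‖ := fun g => by
    have h3 := val_le (a := a) (x := v (x + r • g)) (η := s * ‖D (x + r • g)‖) hσ
    have h4 := hl (v (x + r • g)) (h.lb _)
    unfold cost at h3
    have e : v (x + r • g) ^ ((2 : ℝ) / 3) - a + σ ^ 2 = v (x + r • g) ^ ((2 : ℝ) / 3) + b := by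
      rw [hb]; ring
    rw [e] at h3
    linarith
  have hcv : Continuous fun g => v (x + r • g) := h.cv.comp (by fun_prop)
  have hbd : ∀ g, ‖v (x + r • g) - X‖ ≤ |c| + |C| + |X| := fun g =>
    (norm_sub_le _ _).trans (add_le_add (h.abs_le _) le_rfl)
  have i0 : Integrable (fun g => v (x + r • g) - X) (stdGaussian E) := hiv.sub (integrable_const _)
  have i1 : Integrable (fun g => (v (x + r • g) - X) ^ 2) (stdGaussian E) :=
    integrable_stdGaussian_of_bounded (B := (|c| + |C| + |X|) ^ 2)
      ((hcv.sub continuous_const).pow 2) fun g => by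
        rw [norm_pow]; exact pow_le_pow_left₀ (norm_nonneg _) (hbd g) 2
  have i2 : Integrable (fun g => |v (x + r • g) - X| ^ 3) (stdGaussian E) :=
    integrable_stdGaussian_of_bounded (B := (|c| + |C| + |X|) ^ 3)
      ((hcv.sub continuous_const).abs.pow 3) fun g => by
        rw [norm_pow, Real.norm_eq_abs, abs_abs]
        exact pow_le_pow_left₀ (abs_nonneg _) (hbd g) 3
  have iL : Integrable (fun g => val a S (v (x + r • g)) (s * ‖D (x + r • g)‖)) (stdGaussian E) := by
    obtain ⟨B, hB⟩ := exists_val_bound a S c C (s * L)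
    refine integrable_stdGaussian_of_bounded (B := B)
      ((continuous_val_comp h.cv h.cD a S s).comp (by fun_prop)) fun g => ?_
    exact hB _ ⟨h.lb _, h.ub _⟩ _ ⟨by positivity, mul_le_mul_of_nonneg_left (h.nD _) hs0⟩
  have j1 : Integrable (fun g => (X ^ ((2 : ℝ) / 3) + b) ^ 2 + l * (v (x + r • g) - X))
    (stdGaussian E) := (integrable_const _).add (i0.const_mul l)
  have j2 : Integrable (fun g => (X ^ ((2 : ℝ) / 3) + b) ^ 2 + l * (v (x + r • g) - X)
    + curv X b / 2 * (v (x + r • g) - X) ^ 2) (stdGaussian E) := j1.add (i1.const_mul _)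
  have j3 : Integrable (fun g => (X ^ ((2 : ℝ) / 3) + b) ^ 2 + l * (v (x + r • g) - X)
    + curv X b / 2 * (v (x + r • g) - X) ^ 2 + K' * |v (x + r • g) - X| ^ 3) (stdGaussian E) :=
    j2.add (i2.const_mul _)
  have hint := integral_mono iL (j3.sub (hiD.const_mul (4 / 3 * σ * s))) hpt
  have hrw : ∫ g, ((X ^ ((2 : ℝ) / 3) + b) ^ 2 + l * (v (x + r • g) - X)
      + curv X b / 2 * (v (x + r • g) - X) ^ 2 + K' * |v (x + r • g) - X| ^ 3
      - 4 / 3 * σ * s * ‖D (x + r • g)‖) ∂stdGaussian E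
      = (X ^ ((2 : ℝ) / 3) + b) ^ 2
        + curv X b / 2 * ∫ g, (v (x + r • g) - X) ^ 2 ∂stdGaussian E
        + K' * ∫ g, |v (x + r • g) - X| ^ 3 ∂stdGaussian E
        - 4 / 3 * σ * s * ∫ g, ‖D (x + r • g)‖ ∂stdGaussian E := by
    rw [integral_sub j3 (hiD.const_mul _), integral_add j2 (i2.const_mul _),
      integral_add j1 (i1.const_mul _), integral_add (integrable_const _) (i0.const_mul l),
      integral_const_mul, integral_const_mul, integral_const_mul, integral_const_mul,
      integral_sub hiv (integrable_const _), ← hX]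
    simp
  have hfin := step_arith (κ := curv X b) (T := ∫ g, |v (x + r • g) - X| ^ 3 ∂stdGaussian E)
    (integral_nonneg fun g => sq_nonneg _) h1 h2 hQ hK' hn0 hDL hσ.1 hσ.2
    hq0 hq hr0 hr1 hκ (by positivity) hfo
  have hD2 : 4 / 3 * σ * s * n ≤ 4 / 3 * σ * s * ∫ g, ‖D (x + r • g)‖ ∂stdGaussian E :=
    mul_le_mul_of_nonneg_left hnD (by have := hσ.1; positivity)
  have hval' : val a S X (q * n) = (X ^ ((2 : ℝ) / 3) + b) ^ 2 - 4 / 3 * σ * (q * n) := by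
    rw [hval, cost, hb]; ring
  have hint' := hint.trans_eq hrw
  rw [hval']
  linarith

end

/-! ### Monotonicity along the heat flow -/

section
set_option linter.unusedSectionVars false
variable {E : Type*} [NormedAddCommGroup E] [InnerProductSpace ℝ E] [FiniteDimensional ℝ E]
  [MeasurableSpace E] [BorelSpace E]

/-- The Gaussian average of `F` at time `t`, with variance `1 - t`: it runs from the mean of `F` seen
from `x` at `t = 0` to `F` itself at `t = 1`. It is used for `f` and for its gradient. -/
noncomputable def flow {W : Type*} [NormedAddCommGroup W] [NormedSpace ℝ W] (F : E → W) (t : ℝ)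
    (x : E) : W := ∫ g, F (x + √(1 - t) • g) ∂stdGaussian E

/-- The Bellman functional `φ t` along the heat flow. -/
noncomputable def bellman (a S : ℝ) (v : E → ℝ) (D : E → E) (t : ℝ) : ℝ :=
  ∫ z, val a S (flow v t (√t • z)) (√t * ‖flow D t (√t • z)‖) ∂stdGaussian E

lemma flow_semigroup {W : Type*} [NormedAddCommGroup W] [NormedSpace ℝ W] {F : E → W}
    (hF : Continuous F) {B : ℝ} (hB : ∀ x, ‖F x‖ ≤ B) {t r : ℝ} (htr : t + r ^ 2 ≤ 1)
    (hr : 0 ≤ r) (x : E) :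
    ∫ g, flow F (t + r ^ 2) (x + r • g) ∂stdGaussian E = flow F t x := by
  have h := integral_comp_prod_stdGaussian (E := E) (F := fun y => F (x + y)) (sq_nonneg r)
    (sub_nonneg.2 htr) (hF.comp (by fun_prop)) fun y => hB _
  rw [Real.sqrt_sq hr, show r ^ 2 + (1 - (t + r ^ 2)) = 1 - t by ring] at h
  simp_rw [← add_assoc] at h
  exact h

variable {a S c C L K : ℝ} {v : E → ℝ} {D : E → E}

lemma Adm.adm_flow (h : Adm c C L K v D) (t : ℝ) : Adm c C L K (flow v t) (flow D t) :=
  h.average _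

lemma bellman_step (hc : 0 < c) (hK : 0 ≤ K) (hS : 0 ≤ S)
    (hSC : C ^ ((2 : ℝ) / 3) + |a| ≤ S ^ 2) (h : Adm c C L K v D) {t0 : ℝ} (ht0 : 0 < t0) :
    ∃ M : ℝ, ∀ t r : ℝ, t0 ≤ t → 0 ≤ r → t + r ^ 2 ≤ 1 →
      bellman a S v D (t + r ^ 2) ≤ bellman a S v D t + M * r ^ 3 := by
  obtain ⟨M, hM⟩ := one_step (E := E) (L := L) hc hK hS hSC (Real.sqrt_pos.2 ht0)
  refine ⟨M, fun t r ht hr htr => ?_⟩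
  have ht' : 0 ≤ t := ht0.le.trans ht
  have hr1 : r ≤ 1 := by nlinarith
  have hA := h.adm_flow (t + r ^ 2)
  have hA' := h.adm_flow t
  set s := √(t + r ^ 2) with hs
  obtain ⟨B, hB⟩ := exists_val_bound a S c C (s * L)
  obtain ⟨B', hB'⟩ := exists_val_bound a S c C (√t * L)
  have hs0 : 0 ≤ s := Real.sqrt_nonneg _
  have hFc : Continuous fun y => val a S (flow v (t + r ^ 2) y)
      (s * ‖flow D (t + r ^ 2) y‖) := continuous_val_comp hA.cv hA.cD a S s
  have hFb : ∀ y, ‖val a S (flow v (t + r ^ 2) y) (s * ‖flow D (t + r ^ 2) y‖)‖ ≤ B :=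
    fun y => hB _ ⟨hA.lb y, hA.ub y⟩ _
      ⟨by positivity, mul_le_mul_of_nonneg_left (hA.nD y) hs0⟩
  have e := integral_comp_prod_stdGaussian (E := E) ht' (sq_nonneg r) hFc hFb
  rw [Real.sqrt_sq hr] at e
  have hb : bellman a S v D (t + r ^ 2) = _ := e.symm
  rw [hb]
  have hi : Integrable (fun z => val a S (flow v t (√t • z))
      (√t * ‖flow D t (√t • z)‖)) (stdGaussian E) :=
    integrable_stdGaussian_of_bounded (B := B')
      ((continuous_val_comp hA'.cv hA'.cD a S √t).comp (by fun_prop)) fun z =>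
        hB' _ ⟨hA'.lb _, hA'.ub _⟩ _
          ⟨by positivity, mul_le_mul_of_nonneg_left (hA'.nD _) (Real.sqrt_nonneg _)⟩
  have hi2 : Integrable (fun z => ∫ g, val a S (flow v (t + r ^ 2) (√t • z + r • g))
      (s * ‖flow D (t + r ^ 2) (√t • z + r • g)‖) ∂stdGaussian E) (stdGaussian E) :=
    integrable_stdGaussian_of_bounded (B := B)
      ((continuous_average hFc hFb r).comp (f := fun z : E => √t • z) (by fun_prop)) fun z => by
        simpa using norm_integral_le_of_norm_le_const (μ := stdGaussian E)
          (Filter.Eventually.of_forall fun g => hFb (√t • z + r • g))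
  refine (integral_mono hi2 (hi.add (integrable_const (M * r ^ 3))) fun z => ?_).trans_eq ?_
  · have := hM _ _ hA √t r (Real.sqrt_le_sqrt ht) hr hr1 (√t • z)
    rw [Real.sq_sqrt ht', flow_semigroup h.cv h.abs_le htr hr,
      flow_semigroup h.cD h.nD htr hr] at this
    exact this
  · simp only [Pi.add_apply]
    rw [integral_add hi (integrable_const _)]
    simp [bellman]

/-- The Bellman functional at `t = 1` is at most its value at `t0`, by summing `n + 1` steps of time
`(1 - t0) / (n + 1)` with total error `O((n + 1) ^ (-1/2))`. -/
lemma bellman_one_le (hc : 0 < c) (hK : 0 ≤ K) (hS : 0 ≤ S)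
    (hSC : C ^ ((2 : ℝ) / 3) + |a| ≤ S ^ 2) (h : Adm c C L K v D) {t0 : ℝ} (ht0 : 0 < t0)
    (ht1 : t0 ≤ 1) : bellman a S v D 1 ≤ bellman a S v D t0 := by
  obtain ⟨M, hM⟩ := bellman_step hc hK hS hSC h ht0
  have key : ∀ n : ℕ, bellman a S v D 1 ≤
      bellman a S v D t0 + M * (1 - t0) * √((1 - t0) / ((n : ℝ) + 1)) := by
    intro n
    set r := √((1 - t0) / ((n : ℝ) + 1)) with hr
    have hn : (0 : ℝ) < (n : ℝ) + 1 := by positivity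
    have hr2 : r ^ 2 = (1 - t0) / ((n : ℝ) + 1) :=
      Real.sq_sqrt (div_nonneg (by linarith) hn.le)
    have hr2' : ((n : ℝ) + 1) * r ^ 2 = 1 - t0 := by rw [hr2]; field_simp
    have hr0 : 0 ≤ r := Real.sqrt_nonneg _
    have hk : ∀ k : ℕ, k ≤ n + 1 →
        bellman a S v D (t0 + k * r ^ 2) ≤ bellman a S v D t0 + k * (M * r ^ 3) := by
      intro k
      induction k with
      | zero => simp
      | succ k ih =>
        intro hkn
        have h1 := ih (by omega)
        have hkn' : (k : ℝ) + 1 ≤ (n : ℝ) + 1 := by exact_mod_cast hkn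
        have h2 := hM (t0 + k * r ^ 2) r (by nlinarith [sq_nonneg r, k.cast_nonneg (α := ℝ)]) hr0
          (by nlinarith [sq_nonneg r])
        have e : t0 + ((k + 1 : ℕ) : ℝ) * r ^ 2 = t0 + k * r ^ 2 + r ^ 2 := by push_cast; ring
        rw [e]
        push_cast
        linarith
    have h3 := hk (n + 1) le_rfl
    push_cast at h3
    have e1 : t0 + ((n : ℝ) + 1) * r ^ 2 = 1 := by linarith
    have e2 : ((n : ℝ) + 1) * (M * r ^ 3) = M * (1 - t0) * r := by rw [← hr2']; ring
    rwa [e1, e2] at h3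
  have hlim : Filter.Tendsto (fun n : ℕ => bellman a S v D t0
      + M * (1 - t0) * √((1 - t0) / ((n : ℝ) + 1))) Filter.atTop
      (nhds (bellman a S v D t0 + M * (1 - t0) * √0)) := by
    refine tendsto_const_nhds.add (tendsto_const_nhds.mul ?_)
    refine (Real.continuous_sqrt.tendsto 0).comp ?_
    have := (tendsto_one_div_add_atTop_nhds_zero_nat (𝕜 := ℝ)).const_mul (1 - t0)
    simpa [div_eq_mul_inv] using this
  simpa using ge_of_tendsto' hlim key

/-- The limit `t → 0` of `bellman_one_le`. The Bellman functional at time `t` is bounded by taking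
`σ = 0`, and the resulting bound `ψ t` is continuous at `0`. -/
lemma bellman_one_le_mean (hc : 0 < c) (hK : 0 ≤ K) (hS : 0 ≤ S)
    (hSC : C ^ ((2 : ℝ) / 3) + |a| ≤ S ^ 2) (h : Adm c C L K v D) :
    bellman a S v D 1 ≤ ((∫ x, v x ∂stdGaussian E) ^ ((2 : ℝ) / 3) - a) ^ 2 := by
  set ψ : ℝ → ℝ := fun t =>
    ∫ z, ((flow v t (√t • z)) ^ ((2 : ℝ) / 3) - a) ^ 2 ∂stdGaussian E with hψ
  have hbd : ∀ x : ℝ, c ≤ x → x ≤ C →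
      ‖(x ^ ((2 : ℝ) / 3) - a) ^ 2‖ ≤ (C ^ ((2 : ℝ) / 3) + |a|) ^ 2 := fun x h1 h2 => by
    have hx := hc.trans_le h1
    rw [norm_pow]
    refine pow_le_pow_left₀ (norm_nonneg _) ((norm_sub_le _ _).trans ?_) 2
    rw [Real.norm_eq_abs, Real.norm_eq_abs, abs_of_pos (Real.rpow_pos_of_pos hx _)]
    have := Real.rpow_le_rpow hx.le h2 (by norm_num : (0 : ℝ) ≤ 2 / 3)
    linarith
  have hcr : Continuous fun x : ℝ => (x ^ ((2 : ℝ) / 3) - a) ^ 2 :=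
    ((Real.continuous_rpow_const (by norm_num)).sub continuous_const).pow 2
  have hu : ∀ z : E, Continuous fun t : ℝ => flow v t (√t • z) := fun z => by
    refine continuous_of_dominated (bound := fun _ => |c| + |C|) (fun t => ?_) (fun t => ?_)
      (integrable_const _) ?_
    · exact (h.cv.comp (by fun_prop)).aestronglyMeasurable
    · exact Filter.Eventually.of_forall fun g => h.abs_le _
    · exact Filter.Eventually.of_forall fun g => h.cv.comp (by fun_prop)
  have hzc : ∀ t : ℝ, Continuous fun z : E =>
      ((flow v t (√t • z)) ^ ((2 : ℝ) / 3) - a) ^ 2 := fun t =>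
    hcr.comp ((h.adm_flow t).cv.comp (f := fun z : E => √t • z) (by fun_prop))
  have hψc : Continuous ψ := by
    refine continuous_of_dominated (bound := fun _ => (C ^ ((2 : ℝ) / 3) + |a|) ^ 2)
      (fun t => (hzc t).aestronglyMeasurable)
      (fun t => Filter.Eventually.of_forall fun z => hbd _ ((h.adm_flow t).lb _) ((h.adm_flow t).ub _))
      (integrable_const _) (Filter.Eventually.of_forall fun z => hcr.comp (hu z))
  have hψ0 : ψ 0 = ((∫ x, v x ∂stdGaussian E) ^ ((2 : ℝ) / 3) - a) ^ 2 := by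
    simp [hψ, flow]
  have hle : ∀ t, 0 < t → t ≤ 1 → bellman a S v D 1 ≤ ψ t := fun t h0 h1 => by
    refine (bellman_one_le hc hK hS hSC h h0 h1).trans ?_
    have hA := h.adm_flow t
    obtain ⟨B, hB⟩ := exists_val_bound a S c C (√t * L)
    refine integral_mono ?_ ?_ fun z => ?_
    · exact integrable_stdGaussian_of_bounded (B := B)
        ((continuous_val_comp hA.cv hA.cD a S √t).comp (f := fun z : E => √t • z) (by fun_prop))
        fun z => hB _ ⟨hA.lb _, hA.ub _⟩ _
          ⟨by positivity, mul_le_mul_of_nonneg_left (hA.nD _) (Real.sqrt_nonneg _)⟩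
    · exact integrable_stdGaussian_of_bounded (hzc t) fun z => hbd _ (hA.lb _) (hA.ub _)
    · refine (val_le (σ := 0) ⟨le_rfl, hS⟩).trans_eq ?_
      simp [cost]
  rw [← hψ0]
  refine ge_of_tendsto ((hψc.tendsto 0).mono_left nhdsWithin_le_nhds :
    Filter.Tendsto ψ (nhdsWithin 0 (Set.Ioi 0)) _) ?_
  filter_upwards [Ioc_mem_nhdsGT one_pos] with t ht using hle t ht.1 ht.2

/-- The improved Beckner inequality for the class `Adm`. -/
theorem Adm.beckner (hc : 0 < c) (hK : 0 ≤ K) (h : Adm c C L K v D) :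
    (∫ x, (v x) ^ ((4 : ℝ) / 3) ∂stdGaussian E) - (∫ x, v x ∂stdGaussian E) ^ ((4 : ℝ) / 3)
      + ((∫ x, v x ∂stdGaussian E) ^ ((2 : ℝ) / 3)
          - ∫ x, (v x) ^ ((2 : ℝ) / 3) ∂stdGaussian E) ^ 2
    ≤ (2 / 9) * ∫ x, (v x) ^ (-(2 : ℝ) / 3) * ‖D x‖ ^ 2 ∂stdGaussian E := by
  set m := ∫ x, v x ∂stdGaussian E with hm
  set s := ∫ x, (v x) ^ ((2 : ℝ) / 3) ∂stdGaussian E with hs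
  have hv0 : ∀ x, 0 < v x := fun x => hc.trans_le (h.lb x)
  have hm0 : 0 < m := by
    have := (h.average 1).lb 0
    simp only [zero_add, one_smul] at this
    exact hc.trans_le this
  -- the optimal value of the parameter
  set a := m ^ ((2 : ℝ) / 3) - s with ha
  have hC0 : 0 ≤ C := (hv0 0).le.trans (h.ub 0)
  set S := √(C ^ ((2 : ℝ) / 3) + |a|)
  have hSC : C ^ ((2 : ℝ) / 3) + |a| ≤ S ^ 2 := (Real.sq_sqrt (by positivity)).ge
  have hS : 0 ≤ S := Real.sqrt_nonneg _
  have hmain := bellman_one_le_mean hc hK hS hSC h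
  have ipow : ∀ p : ℝ, Integrable (fun x => v x ^ p) (stdGaussian E) := fun p => by
    obtain ⟨B, hB⟩ := (isCompact_Icc : IsCompact (Set.Icc c C)).exists_bound_of_continuousOn
      (f := fun y : ℝ => y ^ p)
      (fun y hy => (Real.continuousAt_rpow_const y p
        (Or.inl (hc.trans_le hy.1).ne')).continuousWithinAt)
    refine integrable_stdGaussian_of_bounded (B := B) ?_ fun x => hB _ ⟨h.lb x, h.ub x⟩
    exact h.cv.rpow_const fun x => Or.inl (hv0 x).ne'
  have iD : Integrable (fun x => (v x) ^ (-(2 : ℝ) / 3) * ‖D x‖ ^ 2) (stdGaussian E) := by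
    refine (ipow (-(2 : ℝ) / 3)).mul_bdd (c := L ^ 2) (h.cD.norm.pow 2).aestronglyMeasurable
      (Filter.Eventually.of_forall fun x => ?_)
    rw [norm_pow, norm_norm]
    exact pow_le_pow_left₀ (norm_nonneg _) (h.nD x) 2
  have hbm : bellman a S v D 1 = ∫ x, val a S (v x) ‖D x‖ ∂stdGaussian E := by
    simp [bellman, flow]
  obtain ⟨B, hB⟩ := exists_val_bound a S c C L
  have iv : Integrable (fun x => val a S (v x) ‖D x‖) (stdGaussian E) :=
    integrable_stdGaussian_of_bounded (B := B)
      (by simpa using continuous_val_comp h.cv h.cD a S 1) fun x =>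
        hB _ ⟨h.lb x, h.ub x⟩ _ ⟨norm_nonneg _, h.nD x⟩
  have i1 : Integrable (fun x => v x ^ ((4 : ℝ) / 3) - 2 * a * v x ^ ((2 : ℝ) / 3))
    (stdGaussian E) := (ipow _).sub ((ipow _).const_mul _)
  have hlow := integral_mono (i1.sub (iD.const_mul (2 / 9))) iv
    fun x => le_val (a := a) (η := ‖D x‖) hS (hv0 x)
  have e : ∫ x, (v x ^ ((4 : ℝ) / 3) - 2 * a * v x ^ ((2 : ℝ) / 3)
      - 2 / 9 * ((v x) ^ (-(2 : ℝ) / 3) * ‖D x‖ ^ 2)) ∂stdGaussian E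
      = ∫ x, v x ^ ((4 : ℝ) / 3) ∂stdGaussian E - 2 * a * s
        - 2 / 9 * ∫ x, (v x) ^ (-(2 : ℝ) / 3) * ‖D x‖ ^ 2 ∂stdGaussian E := by
    rw [integral_sub i1 (iD.const_mul _), integral_sub (ipow _) ((ipow _).const_mul _),
      integral_const_mul, integral_const_mul]
  have hlow' := e.symm.trans_le hlow
  rw [hbm] at hmain
  rw [rpow_four_thirds hm0]
  have e2 : m ^ ((2 : ℝ) / 3) - a = s := by rw [ha]; ring
  rw [e2] at hmain
  have e3 : m ^ ((2 : ℝ) / 3) = a + s := by rw [ha]; ring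
  rw [e3]
  linarith

end

lemma adm_of_contDiff {E : Type*} [NormedAddCommGroup E] [InnerProductSpace ℝ E]
    [FiniteDimensional ℝ E] {f g : E → ℝ} {c : ℝ}
    (hg : ContDiff ℝ (⊤ : ℕ∞) g) (hg0 : ∀ x, 0 ≤ g x)
    (hbd : ∀ n : ℕ, ∃ C : ℝ, ∀ x, ‖iteratedFDeriv ℝ n g x‖ ≤ C)
    (hf : f = fun x => g x + c) :
    ∃ C L K : ℝ, 0 ≤ K ∧ Adm c C L K f (gradient f) := by
  obtain ⟨C0, h0⟩ := hbd 0
  obtain ⟨C1, h1⟩ := hbd 1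
  obtain ⟨C2, h2⟩ := hbd 2
  have hfc : ContDiff ℝ (⊤ : ℕ∞) f := by rw [hf]; exact hg.add contDiff_const
  have hfd : ∀ x, fderiv ℝ f x = fderiv ℝ g x := fun x => by rw [hf]; simp
  have hfd' : fderiv ℝ f = fderiv ℝ g := funext hfd
  have hdiff : Differentiable ℝ f := hfc.differentiable (by simp)
  have hd1 : ContDiff ℝ 1 (fderiv ℝ f) := hfc.fderiv_right (WithTop.coe_le_coe.2 (le_top : (1 + 1 : ℕ∞) ≤ ⊤))
  have hL : ∀ x, ‖fderiv ℝ f x‖ ≤ C1 := fun x => by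
    have := h1 x
    rwa [← norm_iteratedFDeriv_fderiv, norm_iteratedFDeriv_zero, ← hfd] at this
  have hK : ∀ x, ‖fderiv ℝ (fderiv ℝ f) x‖ ≤ C2 := fun x => by
    have := h2 x
    rwa [← norm_iteratedFDeriv_fderiv, ← norm_iteratedFDeriv_fderiv, norm_iteratedFDeriv_zero,
      ← hfd'] at this
  have hK0 : 0 ≤ C2 := (norm_nonneg (fderiv ℝ (fderiv ℝ f) 0)).trans (hK 0)
  have hlip : ∀ x y, ‖fderiv ℝ f y - fderiv ℝ f x‖ ≤ C2 * ‖y - x‖ := fun x y =>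
    convex_univ.norm_image_sub_le_of_norm_fderiv_le
      (fun z _ => (hd1.differentiable (by simp)).differentiableAt) (fun z _ => hK z)
      (Set.mem_univ x) (Set.mem_univ y)
  have hinner : ∀ x k, inner ℝ (gradient f x) k = fderiv ℝ f x k := fun x k => by
    simp [gradient]
  refine ⟨C0 + c, C1, C2, hK0, ?_⟩
  refine ⟨hdiff.continuous, ?_, ?_, ?_, ?_, ?_, ?_⟩
  · exact (LinearIsometryEquiv.continuous _).comp hd1.continuous
  · intro x; rw [hf]; linarith [hg0 x]
  · intro x
    have := h0 x
    rw [norm_iteratedFDeriv_zero] at this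
    rw [hf]
    linarith [le_abs_self (g x), Real.norm_eq_abs (g x)]
  · intro x
    rw [gradient, LinearIsometryEquiv.norm_map]
    exact hL x
  · intro x k
    rw [hinner]
    have := (convex_segment x (x + k)).norm_image_sub_le_of_norm_fderiv_le' (𝕜 := ℝ) (f := f)
      (φ := fderiv ℝ f x) (C := C2 * ‖k‖) (fun z _ => hdiff z) (fun z hz => ?_)
      (left_mem_segment ℝ x (x + k)) (right_mem_segment ℝ x (x + k))
    · rw [add_sub_cancel_left, Real.norm_eq_abs] at this
      linarith
    · refine (hlip x z).trans (mul_le_mul_of_nonneg_left ?_ hK0)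
      have := norm_sub_le_of_mem_segment hz
      simpa using this
  · intro x k
    rw [gradient, gradient, ← map_sub, LinearIsometryEquiv.norm_map]
    simpa using hlip x (x + k)

end Beckner

/-- Improved Beckner inequality at `p = 4/3`. -/
theorem improved_beckner_four_thirds (d : ℕ)
    (f g : EuclideanSpace ℝ (Fin d) → ℝ) (c : ℝ) (hc : 0 < c)
    (hg : ContDiff ℝ (⊤ : ℕ∞) g) (hg0 : ∀ x, 0 ≤ g x)
    (hbd : ∀ n : ℕ, ∃ C : ℝ, ∀ x, ‖iteratedFDeriv ℝ n g x‖ ≤ C)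
    (hf : f = fun x => g x + c) :
    (∫ x, (f x) ^ ((4 : ℝ) / 3) ∂(gaussianMeasure d))
      - (∫ x, f x ∂(gaussianMeasure d)) ^ ((4 : ℝ) / 3)
      + ((∫ x, f x ∂(gaussianMeasure d)) ^ ((2 : ℝ) / 3)
          - ∫ x, (f x) ^ ((2 : ℝ) / 3) ∂(gaussianMeasure d)) ^ 2
    ≤ (2 / 9) * ∫ x, (f x) ^ (-(2 : ℝ) / 3) * ‖gradient f x‖ ^ 2 ∂(gaussianMeasure d) := by
  obtain ⟨C, L, K, hK, h⟩ := Beckner.adm_of_contDiff hg hg0 hbd hf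
  rw [Beckner.gaussianMeasure_eq_stdGaussian]
  exact h.beckner hc hK
end
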